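/- For every dimension d ≥ 1 there exist a damping parameter τ > 0 and a number of smoothing steps ν ∈ ℕ, both independent of the mesh size h and the spline degree p, such that the two-grid method on S^d with coarse space (S_c)^d and the additive subspace correction smoother L = Σ_{α∈{0,1}^d} Q_α′ L_α Q_α — where each L_α is obtained from A_α = Q_α′ A Q_α (written as a sum of d+1 tensor products of the operators K_{α_j} and M_{α_j}) by replacing every factor K_0 with σ M_0, σ = 12 h^{-2} — converges in the norm ‖·‖_A with a contraction rate q < 1 that does not depend on h or p. -/

import Mathlib

noncomputable section

open MeasureTheory Set

namespace SplineMG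

/-- The `j`-th piece of the uniform partition of `[0,1]` into `m` subintervals of
length `h = 1/m`; the first and last pieces are extended to `-∞` resp. `+∞`
(the spline is extended polynomially outside `[0,1]`). -/
def pieceSet (m j : ℕ) : Set ℝ :=
  (if j = 0 then Iic ((1 : ℝ) / m) else Icc ((j : ℝ) / m) (((j : ℝ) + 1) / m)) ∪
  (if j = m - 1 then Ici (((m : ℝ) - 1) / m) else ∅)

/-- `u : ℝ → ℝ` belongs to the univariate spline space `S` of degree `p` and maximal
smoothness `C^{p-1}` on the uniform partition of `(0,1)` into `m` intervals of
length `h = 1/m`. -/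
def IsSpline (m p : ℕ) (u : ℝ → ℝ) : Prop :=
  ContDiffOn ℝ (p - 1 : ℕ) u (Ioo (0 : ℝ) 1) ∧
  ∀ j < m, ∃ q : Polynomial ℝ, q.natDegree ≤ p ∧ ∀ x ∈ pieceSet m j, u x = q.eval x

/-- `u` belongs to the subspace `S₀` of `S`: all odd derivatives of order `< p`
vanish at both endpoints. -/
def IsSpline0 (m p : ℕ) (u : ℝ → ℝ) : Prop :=
  IsSpline m p u ∧
  ∀ l : ℕ, 2 * l + 1 < p →
    iteratedDeriv (2 * l + 1) u 0 = 0 ∧ iteratedDeriv (2 * l + 1) u 1 = 0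

/-- The `L²(0,1)` inner product. -/
def ip0 (u v : ℝ → ℝ) : ℝ := ∫ x in Ioo (0 : ℝ) 1, u x * v x

/-- The squared `L²(0,1)` norm `‖u‖₀²`. -/
def l2normSq (u : ℝ → ℝ) : ℝ := ∫ x in Ioo (0 : ℝ) 1, u x ^ 2

/-- The `L²(0,1)` norm `‖u‖₀`. -/
def l2norm (u : ℝ → ℝ) : ℝ := Real.sqrt (l2normSq u)

/-- The squared `H¹(0,1)` seminorm `|u|₁²`. -/
def h1semiSq (u : ℝ → ℝ) : ℝ := ∫ x in Ioo (0 : ℝ) 1, deriv u x ^ 2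

/-- The `H¹(0,1)` seminorm `|u|₁`. -/
def h1semi (u : ℝ → ℝ) : ℝ := Real.sqrt (h1semiSq u)

/-- The squared full `H¹(0,1)` norm. -/
def h1normSq (u : ℝ → ℝ) : ℝ := l2normSq u + h1semiSq u

/-- `u` belongs to `S₁`, the `L²(0,1)`-orthogonal complement of `S₀` in `S`. -/
def IsSpline1 (m p : ℕ) (u : ℝ → ℝ) : Prop :=
  IsSpline m p u ∧ ∀ v, IsSpline0 m p v → ip0 u v = 0

/-- `v = Q₀ u` is the `L²(0,1)`-orthogonal projection of `u` onto `S₀`. -/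
def IsL2Proj0 (m p : ℕ) (u v : ℝ → ℝ) : Prop :=
  IsSpline0 m p v ∧ ∀ w, IsSpline0 m p w → ip0 (u - v) w = 0

/-- The component predicate: `false ↦ S₀`, `true ↦ S₁`. -/
def IsSplineC (m p : ℕ) : Bool → (ℝ → ℝ) → Prop
  | false => IsSpline0 m p
  | true => IsSpline1 m p

/-- The tensor-product spline space `S^d = S ⊗ ⋯ ⊗ S` on `(0,1)^d`. -/
def TensorSpline (d m p : ℕ) : Submodule ℝ ((Fin d → ℝ) → ℝ) :=
  Submodule.span ℝ {u | ∃ f : Fin d → ℝ → ℝ, (∀ i, IsSpline m p (f i)) ∧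
    u = fun x => ∏ i, f i (x i)}

/-- The subspace `S_α = S_{α₁} ⊗ ⋯ ⊗ S_{α_d}` of `S^d`, for `α ∈ {0,1}^d`
(`false ↦ 0`, `true ↦ 1`). -/
def TensorSplineSub (d m p : ℕ) (α : Fin d → Bool) : Submodule ℝ ((Fin d → ℝ) → ℝ) :=
  Submodule.span ℝ {u | ∃ f : Fin d → ℝ → ℝ, (∀ i, IsSplineC m p (α i) (f i)) ∧
    u = fun x => ∏ i, f i (x i)}

/-- The open unit cube `Ω = (0,1)^d`. -/
def cube (d : ℕ) : Set (Fin d → ℝ) := Set.univ.pi fun _ => Ioo (0 : ℝ) 1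

/-- The `i`-th partial derivative. -/
def pd (d : ℕ) (i : Fin d) (u : (Fin d → ℝ) → ℝ) : (Fin d → ℝ) → ℝ :=
  fun x => deriv (fun t => u (Function.update x i t)) (x i)

/-- The `L²(Ω)` inner product on the unit cube. -/
def ipd (d : ℕ) (u v : (Fin d → ℝ) → ℝ) : ℝ := ∫ x in cube d, u x * v x

/-- The squared `L²(Ω)` norm. -/
def l2normSqD (d : ℕ) (u : (Fin d → ℝ) → ℝ) : ℝ := ∫ x in cube d, u x ^ 2

/-- The bilinear form `a(u,v) = ∫_Ω (∇u·∇v + uv) dx`. -/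
def aForm (d : ℕ) (u v : (Fin d → ℝ) → ℝ) : ℝ :=
  ∫ x in cube d, (∑ i, pd d i u x * pd d i v x) + u x * v x

/-- The squared `H¹(Ω)` seminorm. -/
def h1semiSqD (d : ℕ) (u : (Fin d → ℝ) → ℝ) : ℝ :=
  ∫ x in cube d, ∑ i, pd d i u x ^ 2

/-- The squared full `H¹(Ω)` norm. -/
def h1normSqD (d : ℕ) (u : (Fin d → ℝ) → ℝ) : ℝ := l2normSqD d u + h1semiSqD d u

/-- `v = Q_α u` is the `L²(Ω)`-orthogonal projection of `u` onto `S_α`. -/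
def IsL2ProjSub (d m p : ℕ) (α : Fin d → Bool) (u v : (Fin d → ℝ) → ℝ) : Prop :=
  v ∈ TensorSplineSub d m p α ∧ ∀ w ∈ TensorSplineSub d m p α, ipd d (u - v) w = 0

/-- The coarse tensor-product spline space `(S_c)^d` (with `m/2` knot spans of
width `2h` per direction). -/
def TensorSplineCoarse (d m p : ℕ) : Submodule ℝ ((Fin d → ℝ) → ℝ) :=
  TensorSpline d (m / 2) p

/-- `v = T_c u` is the `a(·,·)`-orthogonal (Galerkin) projection of `u` onto `(S_c)^d`. -/
def IsGalerkinCoarseProj (d m p : ℕ) (u v : (Fin d → ℝ) → ℝ) : Prop :=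
  v ∈ TensorSplineCoarse d m p ∧ ∀ w ∈ TensorSplineCoarse d m p, aForm d (u - v) w = 0

end SplineMG

namespace SplineMG

/-- The bilinear form of the local smoother `L_α` on `S_α`, obtained from
`A_α = Q_α′AQ_α` (a sum of `d+1` tensor products of the operators `K_{α_j}` and
`M_{α_j}`) by replacing every factor `K₀` by `σM₀` with `σ = 12h⁻² = 12m²`:
`⟨L_α u, v⟩ = Σ_j (if α_j = 0 then σ·(u,v)_{L²} else (∂_j u, ∂_j v)_{L²}) + (u,v)_{L²}`. -/
def smootherForm (d m : ℕ) (α : Fin d → Bool) (u v : (Fin d → ℝ) → ℝ) : ℝ :=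
  (∑ j : Fin d,
    if α j = false then 12 * (m : ℝ) ^ 2 * ipd d u v
    else ∫ x in cube d, pd d j u x * pd d j v x) + ipd d u v

/-- One smoothing step `e ↦ e − τL⁻¹Ae` of the additive subspace correction smoother
`L = Σ_α Q_α′ L_α Q_α`, whose inverse is `L⁻¹ = Σ_α L_α⁻¹ Q_α′`: the correction is
`Σ_α w_α` where `w_α ∈ S_α` solves `⟨L_α w_α, z⟩ = a(e, z)` for all `z ∈ S_α`. -/
def SmoothStep (d m p : ℕ) (τ : ℝ) (e enext : (Fin d → ℝ) → ℝ) : Prop :=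
  ∃ w : (Fin d → Bool) → (Fin d → ℝ) → ℝ,
    (∀ α, w α ∈ TensorSplineSub d m p α ∧
      ∀ z ∈ TensorSplineSub d m p α, smootherForm d m α (w α) z = aForm d e z) ∧
    enext = e - τ • ∑ α : Fin d → Bool, w α

/-- The exact coarse-grid correction step for the error: `e ↦ e − T_c e` where `T_c`
is the Galerkin (`a(·,·)`-orthogonal) projector onto `(S_c)^d`. -/
def CoarseCorrection (d m p : ℕ) (e enext : (Fin d → ℝ) → ℝ) : Prop :=
  ∃ w : (Fin d → ℝ) → ℝ, IsGalerkinCoarseProj d m p e w ∧ enext = e - w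

/-!
Let `L` be the bilinear form of the smoother and `a` the energy form. If `τ a ≤ L` and every `v` is
approximated by the coarse space with `L(v - z, v - z) ≤ C a(v, v)`, then one smoothing step
followed by the Galerkin correction multiplies the squared energy norm by at most `1 - τ / C`.

The two hypotheses reduce to univariate facts that are robust in the degree. The inverse inequality
`|u|₁² ≤ 12 h⁻² ‖u‖²` on `S₀` is elementary for the piecewise linear derivative of order `p - 1`,
and it descends from `u'` to `u` by Cauchy–Schwarz in `‖u'‖² = -(u, u'')`, where the boundary terms
vanish at each order because the odd derivatives do. The coarse splines with vanishing odd boundary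
derivatives satisfy `‖u - g‖² ≤ 3 h² |u|₁²`, by induction on the degree: the primitive of the `L²`
projection of `u'` onto the splines of one degree less is an approximation of `u` whose `L²` error
is controlled by duality, and even and odd boundary conditions alternate along the induction.
Together these make the `L²` projectors onto `S₀` and onto the coarse splines stable in `H¹`.

In an `L²`-orthonormal basis of `S` adapted to `S₀ ⊕ S₁`, the tensor product of the univariate
coarse projectors then has the approximation property in every dimension.
-/

/-! ### Positive semidefinite forms and the abstract two-grid estimate -/

open LinearMap (BilinForm)

lemma le_of_sq_le_mul_self {x y : ℝ} (hy : 0 ≤ y) (h : x ^ 2 ≤ y * x) : x ≤ y := by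
  by_contra! hxy
  nlinarith

section BilinearForms

variable {V : Type*} [AddCommGroup V] [Module ℝ V]

lemma sq_apply_le_of_isPosSemidef {B : BilinForm ℝ V} (hB : B.IsPosSemidef) (x y : V) :
    B x y ^ 2 ≤ B x x * B y y :=
  B.apply_sq_le_of_symm hB.nonneg (BilinForm.isSymm_iff.1 hB.isSymm) x y

lemma apply_self_eq_add_of_apply_sub_eq_zero {B : BilinForm ℝ V} (hB : B.IsSymm) {x y : V}
    (h : B (x - y) y = 0) : B x x = B (x - y) (x - y) + B y y := by
  have hxy := hB.eq x y
  simp only [map_sub, LinearMap.sub_apply] at h ⊢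
  linarith

lemma exists_forall_bilinForm_eq [FiniteDimensional ℝ V] (B : BilinForm ℝ V)
    (hdef : ∀ x, B x x = 0 → x = 0) (φ : V →ₗ[ℝ] ℝ) : ∃ x, ∀ z, B x z = φ z := by
  have injective_B : Function.Injective B := by
    rw [← LinearMap.ker_eq_bot, LinearMap.ker_eq_bot']
    intro x hx
    exact hdef x (by rw [hx, LinearMap.zero_apply])
  have surjective_B : Function.Surjective (B : V →ₗ[ℝ] Module.Dual ℝ V) :=
    (LinearMap.injective_iff_surjective_of_finrank_eq_finrank
      Subspace.dual_finrank_eq.symm).1 injective_B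
  obtain ⟨x, hx⟩ := surjective_B φ
  exact ⟨x, fun z => by rw [hx]⟩

lemma exists_mem_forall_bilinForm_sub_eq_zero (B : BilinForm ℝ V) (U : Submodule ℝ V)
    [FiniteDimensional ℝ U] (hdef : ∀ x ∈ U, B x x = 0 → x = 0) (f : V) :
    ∃ s ∈ U, ∀ z ∈ U, B (f - s) z = 0 := by
  obtain ⟨s, hs⟩ := exists_forall_bilinForm_eq (B.restrict U)
    (fun x hx => Subtype.ext (hdef x x.2 hx)) ((B f).domRestrict U)
  exact ⟨s, s.2, fun z hz => by
    rw [map_sub, LinearMap.sub_apply, sub_eq_zero]; exact (hs ⟨z, hz⟩).symm⟩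

variable {a L : BilinForm ℝ V} {τ C : ℝ}

lemma energy_le_mul_of_approximation (hL : L.IsPosSemidef) (hC : 0 ≤ C) {v y z : V}
    (hy : ∀ x, L y x = a v x) (hvz : a v z = 0) (hz : L (v - z) (v - z) ≤ C * a v v) :
    a v v ≤ C * L y y := by
  have hvv : L y (v - z) = a v v := by rw [hy, map_sub, hvz, sub_zero]
  refine le_of_sq_le_mul_self (mul_nonneg hC (hL.nonneg y)) ?_
  calc a v v ^ 2 = L y (v - z) ^ 2 := by rw [hvv]
    _ ≤ L y y * L (v - z) (v - z) :=
        sq_apply_le_of_isPosSemidef hL y (v - z)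
    _ ≤ L y y * (C * a v v) := by gcongr; exact hL.nonneg y
    _ = C * L y y * a v v := by ring

lemma energy_sub_smul_le (ha : a.IsSymm) (hτ : 0 ≤ τ) (hsmooth : ∀ x, τ * a x x ≤ L x x)
    {v y : V} (hy : ∀ x, L y x = a v x) :
    a (v - τ • y) (v - τ • y) ≤ a v v - τ * L y y := by
  have := mul_le_mul_of_nonneg_left (hsmooth y) hτ
  simp only [map_sub, map_smul, smul_eq_mul, LinearMap.sub_apply, LinearMap.smul_apply]
  rw [ha.eq y v, ← hy y]
  linarith

/-- One smoothing step `c ↦ c - τ L⁻¹ a c` followed by an `a`-orthogonal correction to `v`. The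
smoother is moved onto the other argument of `a`, so that Cauchy–Schwarz reduces the claim to the
energy of the smoothed `v`, where the approximation property applies. -/
lemma twoGrid_contraction [FiniteDimensional ℝ V] (ha : a.IsPosSemidef) (hL : L.IsPosSemidef)
    (hLdef : ∀ x, L x x = 0 → x = 0) (hτ : 0 < τ) (hτC : τ ≤ C)
    (hsmooth : ∀ x, τ * a x x ≤ L x x) {c w v : V} (hw : ∀ z, L w z = a c z)
    (happrox : ∃ z, a v z = 0 ∧ L (v - z) (v - z) ≤ C * a v v)
    (hv : a v v = a v (c - τ • w)) :
    a v v ≤ (1 - τ / C) * a c c := by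
  have hC : 0 < C := hτ.trans_le hτC
  obtain ⟨y, hy⟩ := exists_forall_bilinForm_eq L hLdef (a v)
  obtain ⟨z, hvz, hz⟩ := happrox
  have hvv : a v v = a c (v - τ • y) := by
    rw [hv, map_sub, map_sub, map_smul, map_smul, ← hy w, ← hw y, hL.isSymm.eq y w,
      ha.isSymm.eq v c]
  have hsmoothed : a (v - τ • y) (v - τ • y) ≤ (1 - τ / C) * a v v := by
    have happ := energy_le_mul_of_approximation hL hC.le hy hvz hz
    have : τ / C * a v v ≤ τ * L y y := by
      rw [div_mul_eq_mul_div, div_le_iff₀ hC]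
      nlinarith
    linarith [energy_sub_smul_le ha.isSymm hτ.le hsmooth hy]
  have hrate : 0 ≤ 1 - τ / C := sub_nonneg.2 ((div_le_one hC).2 hτC)
  refine le_of_sq_le_mul_self (mul_nonneg hrate (ha.nonneg c)) ?_
  calc a v v ^ 2 = a c (v - τ • y) ^ 2 := by rw [hvv]
    _ ≤ a c c * a (v - τ • y) (v - τ • y) :=
        sq_apply_le_of_isPosSemidef ha c (v - τ • y)
    _ ≤ a c c * ((1 - τ / C) * a v v) := by gcongr; exact ha.nonneg c
    _ = (1 - τ / C) * a c c * a v v := by ring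

end BilinearForms

section AdaptedBasis

lemma exists_orthonormalBasis_adapted {E : Type*} [NormedAddCommGroup E] [InnerProductSpace ℝ E]
    [FiniteDimensional ℝ E] (U : Submodule ℝ E) :
    ∃ (b : OrthonormalBasis (Fin (Module.finrank ℝ E)) ℝ E)
      (t : Fin (Module.finrank ℝ E) → Bool),
      (∀ i, t i = false → b i ∈ U) ∧ ∀ i, t i = true → b i ∈ Uᗮ := by
  let W : Bool → Submodule ℝ E := fun s => bif s then Uᗮ else U
  have internal : DirectSum.IsInternal W :=
    (DirectSum.isInternal_submodule_iff_isCompl W Bool.false_ne_true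
      (by ext s; cases s <;> simp)).2 U.isCompl_orthogonal
  have orthogonal : OrthogonalFamily ℝ (fun s => W s) fun s => (W s).subtypeₗᵢ := by
    apply OrthogonalFamily.of_pairwise
    rintro (_ | _) (_ | _) hst
    · exact absurd rfl hst
    · exact U.isOrtho_orthogonal_right
    · exact U.isOrtho_orthogonal_left
    · exact absurd rfl hst
  have mem := fun i => internal.subordinateOrthonormalBasis_subordinate rfl i orthogonal
  refine ⟨internal.subordinateOrthonormalBasis rfl orthogonal,
    (internal.subordinateOrthonormalBasisIndex rfl · orthogonal), fun i hi => ?_, fun i hi => ?_⟩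
  · simpa only [W, hi, cond_false] using mem i
  · simpa only [W, hi, cond_true] using mem i

lemma exists_basis_adapted {V : Type*} [AddCommGroup V] [Module ℝ V] [FiniteDimensional ℝ V]
    {B : BilinForm ℝ V} (hB : B.IsPosSemidef) (hdef : ∀ x, B x x = 0 → x = 0)
    (U : Submodule ℝ V) :
    ∃ (n : ℕ) (b : Module.Basis (Fin n) ℝ V) (t : Fin n → Bool),
      (∀ i j, B (b i) (b j) = if i = j then 1 else 0) ∧
      (∀ i, t i = false → b i ∈ U) ∧ (∀ i, t i = true → ∀ u ∈ U, B (b i) u = 0) := by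
  let core : InnerProductSpace.Core ℝ V :=
    { inner := fun x y => B x y
      conj_inner_symm := fun x y => by simp [hB.isSymm.eq x y]
      re_inner_nonneg := fun x => by simpa using hB.nonneg x
      add_left := fun x y z => by simp
      smul_left := fun x y r => by simp
      definite := hdef }
  let : NormedAddCommGroup V := @InnerProductSpace.Core.toNormedAddCommGroup ℝ V _ _ _ core
  let : InnerProductSpace ℝ V := InnerProductSpace.ofCore core.toCore
  obtain ⟨b, t, mem_U, mem_orthogonal⟩ := exists_orthonormalBasis_adapted U
  refine ⟨_, b.toBasis, t, fun i j => ?_, fun i hi => ?_, fun i hi u hu => ?_⟩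
  · rw [b.coe_toBasis]
    exact orthonormal_iff_ite.1 b.orthonormal i j
  · rw [b.coe_toBasis]
    exact mem_U i hi
  · rw [b.coe_toBasis]
    exact (Submodule.mem_orthogonal' _ _).1 (mem_orthogonal i hi) u hu

end AdaptedBasis

/-! ### Arrays and mode products -/

section SquaredNorm

variable {κ : Type*} [Fintype κ]

/-- The squared Euclidean norm of a coefficient vector; `κ → ℝ` itself carries the sup norm. -/
def sqNorm (x : κ → ℝ) : ℝ := x ⬝ᵥ x

lemma sqNorm_eq_sum (x : κ → ℝ) : sqNorm x = ∑ i, x i ^ 2 := by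
  simp only [sqNorm, dotProduct, sq]

lemma sqNorm_nonneg (x : κ → ℝ) : 0 ≤ sqNorm x := by
  rw [sqNorm_eq_sum]
  positivity

lemma eq_zero_of_sqNorm_le_zero {x : κ → ℝ} (h : sqNorm x ≤ 0) : x = 0 :=
  dotProduct_self_eq_zero.1 (h.antisymm (sqNorm_nonneg x))

lemma sqNorm_add_le (x y : κ → ℝ) : sqNorm (x + y) ≤ 2 * sqNorm x + 2 * sqNorm y := by
  have := sqNorm_nonneg (x - y)
  simp only [sqNorm, add_dotProduct, dotProduct_add, sub_dotProduct, dotProduct_sub] at this ⊢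
  linarith

lemma sqNorm_sub_le (x y : κ → ℝ) : sqNorm (x - y) ≤ 2 * sqNorm x + 2 * sqNorm y := by
  have := sqNorm_nonneg (x + y)
  simp only [sqNorm, add_dotProduct, dotProduct_add, sub_dotProduct, dotProduct_sub] at this ⊢
  linarith

lemma sqNorm_sum_le {σ : Type*} [Fintype σ] (x : σ → κ → ℝ) :
    sqNorm (∑ s, x s) ≤ Fintype.card σ * ∑ s, sqNorm (x s) := by
  simp only [sqNorm_eq_sum, Finset.sum_apply]
  rw [Finset.sum_comm, Finset.mul_sum]
  exact Finset.sum_le_sum fun i _ => sq_sum_le_card_mul_sum_sq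

end SquaredNorm

section ModeProducts

lemma update_funSplitAt_symm {ι κ : Type*} [DecidableEq ι] (j : ι) (y : {k // k ≠ j} → κ)
    (i k : κ) :
    Function.update ((Equiv.funSplitAt j κ).symm (i, y)) j k =
      (Equiv.funSplitAt j κ).symm (k, y) := by
  ext l
  by_cases h : l = j
  · subst h
    simp
  · simp [h]

variable {ι κ : Type*} [DecidableEq ι] [Fintype κ]

/-- The mode-`j` product of the array `c` with the matrix `T`: `T` acts on the `j`-th index, that
is, as `1 ⊗ ⋯ ⊗ T ⊗ ⋯ ⊗ 1`. -/
def modeProd (j : ι) (T : Matrix κ κ ℝ) : Module.End ℝ ((ι → κ) → ℝ) where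
  toFun c I := ∑ i, T (I j) i * c (Function.update I j i)
  map_add' c c' := by
    ext I
    simp [mul_add, Finset.sum_add_distrib]
  map_smul' r c := by
    ext I
    simp [Finset.mul_sum, mul_left_comm]

lemma modeProd_apply (j : ι) (T : Matrix κ κ ℝ) (c : (ι → κ) → ℝ) (I : ι → κ) :
    modeProd j T c I = ∑ i, T (I j) i * c (Function.update I j i) := rfl

lemma modeProd_mul (j : ι) (T S : Matrix κ κ ℝ) (c : (ι → κ) → ℝ) :
    modeProd j (T * S) c = modeProd j T (modeProd j S c) := by
  ext I
  simp only [modeProd_apply, Matrix.mul_apply, Function.update_self, Function.update_idem,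
    Finset.sum_mul, Finset.mul_sum, mul_assoc]
  rw [Finset.sum_comm]

lemma modeProd_comm {j k : ι} (hjk : j ≠ k) (T S : Matrix κ κ ℝ) (c : (ι → κ) → ℝ) :
    modeProd j T (modeProd k S c) = modeProd k S (modeProd j T c) := by
  ext I
  simp only [modeProd_apply, Finset.mul_sum]
  rw [Finset.sum_comm]
  refine Finset.sum_congr rfl fun i _ => Finset.sum_congr rfl fun l _ => ?_
  rw [Function.update_of_ne hjk.symm, Function.update_of_ne hjk, Function.update_comm hjk]
  ring

lemma modeProd_one [DecidableEq κ] (j : ι) (c : (ι → κ) → ℝ) : modeProd j 1 c = c := by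
  ext I
  simp [modeProd_apply, Matrix.one_apply]

lemma modeProd_sub (j : ι) (T S : Matrix κ κ ℝ) (c : (ι → κ) → ℝ) :
    modeProd j (T - S) c = modeProd j T c - modeProd j S c := by
  ext I
  simp [modeProd_apply, sub_mul, Finset.sum_sub_distrib]

/-- Application of the matrix `T` in all the directions listed in `l`. -/
def modeProds (T : Matrix κ κ ℝ) (l : List ι) : Module.End ℝ ((ι → κ) → ℝ) :=
  (l.map fun j => modeProd j T).prod

lemma modeProds_cons (T : Matrix κ κ ℝ) (j : ι) (l : List ι) (c : (ι → κ) → ℝ) :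
    modeProds T (j :: l) c = modeProd j T (modeProds T l c) := by
  rw [modeProds, List.map_cons, List.prod_cons, Module.End.mul_apply, modeProds]

variable [Fintype ι]

lemma sqNorm_modeProd (j : ι) (T : Matrix κ κ ℝ) (c : (ι → κ) → ℝ) :
    sqNorm (modeProd j T c) = ∑ y : {k // k ≠ j} → κ,
      sqNorm (T.mulVec fun i => c ((Equiv.funSplitAt j κ).symm (i, y))) := by
  rw [sqNorm_eq_sum, ← (Equiv.funSplitAt j κ).symm.sum_comp, Fintype.sum_prod_type,
    Finset.sum_comm]
  refine Finset.sum_congr rfl fun y _ => ?_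
  rw [sqNorm_eq_sum]
  refine Finset.sum_congr rfl fun i _ => ?_
  rw [modeProd_apply]
  simp only [update_funSplitAt_symm, Matrix.mulVec, dotProduct]
  simp

lemma sqNorm_modeProd_le (j : ι) {T S : Matrix κ κ ℝ} {C : ℝ}
    (h : ∀ x, sqNorm (T.mulVec x) ≤ C * sqNorm (S.mulVec x)) (c : (ι → κ) → ℝ) :
    sqNorm (modeProd j T c) ≤ C * sqNorm (modeProd j S c) := by
  rw [sqNorm_modeProd, sqNorm_modeProd, Finset.mul_sum]
  exact Finset.sum_le_sum fun y _ => h _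

lemma sqNorm_modeProd_le_mul_sqNorm (j : ι) {T : Matrix κ κ ℝ} {C : ℝ}
    (h : ∀ x, sqNorm (T.mulVec x) ≤ C * sqNorm x) (c : (ι → κ) → ℝ) :
    sqNorm (modeProd j T c) ≤ C * sqNorm c := by
  classical
  have := sqNorm_modeProd_le j (T := T) (S := 1) (C := C) (by simpa using h) c
  rwa [modeProd_one] at this

end ModeProducts

section RankOne

variable {ι κ : Type*} [Fintype ι]

/-- The rank-one array `y₁ ⊗ ⋯ ⊗ y_d`. -/
def rankOne (y : ι → κ → ℝ) : (ι → κ) → ℝ := fun I => ∏ j, y j (I j)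

lemma span_range_rankOne_eq_top [Finite κ] :
    Submodule.span ℝ (Set.range (rankOne : (ι → κ → ℝ) → (ι → κ) → ℝ)) = ⊤ := by
  classical
  have := Fintype.ofFinite κ
  rw [eq_top_iff]
  rintro c -
  have single_eq_rankOne (I : ι → κ) :
      (Pi.single I 1 : (ι → κ) → ℝ) = rankOne fun j => Pi.single (I j) 1 := by
    ext J
    simp [rankOne, Pi.single_apply, Finset.prod_ite_zero, funext_iff]
  rw [pi_eq_sum_univ' c]
  refine Submodule.sum_mem _ fun I _ => Submodule.smul_mem _ _ (Submodule.subset_span ?_)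
  exact ⟨_, (single_eq_rankOne I).symm.trans (by ext J; simp [Pi.single_apply, eq_comm])⟩

variable [DecidableEq ι] [Fintype κ]

lemma modeProd_rankOne (j : ι) (T : Matrix κ κ ℝ) (y : ι → κ → ℝ) :
    modeProd j T (rankOne y) = rankOne (Function.update y j (T.mulVec (y j))) := by
  ext I
  rw [modeProd_apply, rankOne, ← Finset.mul_prod_erase _ _ (Finset.mem_univ j),
    Function.update_self, Matrix.mulVec, dotProduct, Finset.sum_mul]
  refine Finset.sum_congr rfl fun i _ => ?_
  rw [rankOne, ← Finset.mul_prod_erase _ _ (Finset.mem_univ j), Function.update_self, mul_assoc]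
  congr 2
  refine Finset.prod_congr rfl fun k hk => ?_
  have hkj := Finset.ne_of_mem_erase hk
  rw [Function.update_of_ne hkj, Function.update_of_ne hkj]

lemma modeProds_rankOne (T : Matrix κ κ ℝ) {l : List ι} (hl : l.Nodup) (y : ι → κ → ℝ) :
    modeProds T l (rankOne y) = rankOne fun j => if j ∈ l then T.mulVec (y j) else y j := by
  induction l with
  | nil => simp [modeProds]
  | cons k l ih =>
    obtain ⟨hk, hl⟩ := List.nodup_cons.1 hl
    rw [modeProds_cons, ih hl, modeProd_rankOne, if_neg hk]
    congr 1
    ext1 j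
    rcases eq_or_ne j k with rfl | hjk
    · simp
    · simp [hjk]

end RankOne

section Components

variable {ι κ : Type*} [Fintype ι] (t : κ → Bool)

/-- The coordinate projector onto the basis vectors labelled `b`. -/
def labelProj [DecidableEq κ] (b : Bool) : Matrix κ κ ℝ :=
  Matrix.diagonal fun i => if t i = b then 1 else 0

/-- The `α`-component of an array: the entries whose `j`-th index is labelled `α j` for all `j`.
With the labels `false ↦ S₀`, `true ↦ S₁` this is the projector `Q_α` in coordinates. -/
def component (α : ι → Bool) : Module.End ℝ ((ι → κ) → ℝ) where
  toFun c I := if (fun j => t (I j)) = α then c I else 0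
  map_add' c c' := by
    ext I
    simp [ite_add_zero]
  map_smul' r c := by
    ext I
    simp

lemma component_apply (α : ι → Bool) (c : (ι → κ) → ℝ) (I : ι → κ) :
    component t α c I = if (fun j => t (I j)) = α then c I else 0 := rfl

lemma component_component (α β : ι → Bool) (c : (ι → κ) → ℝ) :
    component t α (component t β c) = if α = β then component t α c else 0 := by
  ext I
  simp only [component_apply]
  split_ifs <;> simp_all [component_apply]

lemma component_rankOne {α : ι → Bool} {y : ι → κ → ℝ} (hy : ∀ j i, t i ≠ α j → y j i = 0) :
    component t α (rankOne y) = rankOne y := by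
  ext I
  rw [component_apply]
  split_ifs with h
  · rfl
  · obtain ⟨k, hk⟩ := Function.ne_iff.1 h
    exact (Finset.prod_eq_zero (Finset.mem_univ k) (hy k _ hk)).symm

variable [DecidableEq ι]

lemma sum_component (c : (ι → κ) → ℝ) : ∑ α, component t α c = c := by
  ext I
  simp [component_apply]

lemma component_sum_of_component_eq {W : (ι → Bool) → (ι → κ) → ℝ}
    (hW : ∀ α, component t α (W α) = W α) (α : ι → Bool) :
    component t α (∑ β, W β) = W α := by
  rw [map_sum, Finset.sum_eq_single α]
  · exact hW α
  · intro β _ hβ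
    rw [← hW β, component_component, if_neg hβ.symm]
  · simp

variable [Fintype κ]

lemma sum_sqNorm_component (c : (ι → κ) → ℝ) : ∑ α, sqNorm (component t α c) = sqNorm c := by
  simp only [sqNorm_eq_sum]
  rw [Finset.sum_comm]
  refine Finset.sum_congr rfl fun I _ => ?_
  simp [component_apply, ite_pow]

variable [DecidableEq κ]

lemma modeProd_component_apply (α : ι → Bool) (j : ι) (R : Matrix κ κ ℝ) (c : (ι → κ) → ℝ)
    (I : ι → κ) :
    modeProd j R (component t α c) I =
      if ∀ k, k ≠ j → t (I k) = α k then modeProd j (R * labelProj t (α j)) c I else 0 := by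
  have label_update (i : κ) : (fun k => t (Function.update I j i k)) = α ↔
      t i = α j ∧ ∀ k, k ≠ j → t (I k) = α k := by
    rw [funext_iff]
    simp only [Function.update_apply]
    constructor
    · intro h
      exact ⟨by simpa using h j, fun k hk => by simpa [hk] using h k⟩
    · rintro ⟨hj, h⟩ k
      split_ifs with hk
      · rw [hk, hj]
      · exact h k hk
  simp only [modeProd_apply, component_apply, label_update, labelProj, Matrix.mul_diagonal]
  split_ifs with h
  · simp only [and_iff_left h, mul_ite, mul_one, mul_zero, ite_mul, zero_mul]
  · simp only [h, and_false, if_false, mul_zero, Finset.sum_const_zero]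

lemma sqNorm_modeProd_component_le (α : ι → Bool) (j : ι) (R : Matrix κ κ ℝ) (c : (ι → κ) → ℝ) :
    sqNorm (modeProd j R (component t α c)) ≤
      sqNorm (modeProd j (R * labelProj t (α j)) c) := by
  rw [sqNorm_eq_sum, sqNorm_eq_sum]
  refine Finset.sum_le_sum fun I _ => ?_
  rw [modeProd_component_apply]
  split_ifs
  · exact le_rfl
  · simpa using sq_nonneg _

end Components

/-! ### The two-grid estimate in coordinates -/

/-- What the two-grid analysis needs to know about the univariate spline space with mesh size
`1 / M`, in the coordinates of an `L²`-orthonormal basis indexed by `κ` which is adapted to the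
splitting `S = S₀ ⊕ S₁`: the labels `false ↦ S₀`, `true ↦ S₁` of the basis elements, a factor `grad`
of the stiffness matrix `gradᵀ * grad`, and the `L²` projector `proj` onto a space of coarse
splines. The stability constants are `74 = 2 + 2 * 12 * 3`, from the inverse inequality and the
approximation property, and `150 = 2 + 2 * 74`. -/
structure UnivariateModel (κ : Type*) [Fintype κ] [DecidableEq κ] (M : ℝ) where
  label : κ → Bool
  grad : Matrix κ κ ℝ
  proj : Matrix κ κ ℝ
  one_le : 1 ≤ M
  inverse_le : ∀ x, sqNorm ((grad * labelProj label false).mulVec x) ≤ 12 * M ^ 2 * sqNorm x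
  stable_le : ∀ x, sqNorm ((grad * labelProj label true).mulVec x) ≤ 150 * sqNorm (grad.mulVec x)
  proj_le : ∀ x, sqNorm (proj.mulVec x) ≤ sqNorm x
  approx_le : ∀ x, sqNorm ((1 - proj).mulVec x) ≤ 3 / M ^ 2 * sqNorm (grad.mulVec x)
  grad_proj_le : ∀ x, sqNorm ((grad * proj).mulVec x) ≤ 74 * sqNorm (grad.mulVec x)

namespace UnivariateModel

variable {κ : Type*} [Fintype κ] [DecidableEq κ] {M : ℝ} (O : UnivariateModel κ M)
  (ι : Type*) [Fintype ι] [DecidableEq ι]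

/-- The form `a` on coefficient arrays. -/
def energy : BilinForm ℝ ((ι → κ) → ℝ) :=
  ∑ j, (dotProductBilin ℝ ℝ).compl₁₂ (modeProd j O.grad) (modeProd j O.grad) +
    dotProductBilin ℝ ℝ

variable {ι}

/-- The form of the local smoother `L_α` on coefficient arrays. -/
def localSmoother (α : ι → Bool) : BilinForm ℝ ((ι → κ) → ℝ) :=
  ∑ j, (if α j = false then (12 * M ^ 2) • dotProductBilin ℝ ℝ else
    (dotProductBilin ℝ ℝ).compl₁₂ (modeProd j O.grad) (modeProd j O.grad)) + dotProductBilin ℝ ℝ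

variable (ι) in
/-- The form of the additive smoother `L = Σ_α Q_α′ L_α Q_α` on coefficient arrays. -/
def smoother : BilinForm ℝ ((ι → κ) → ℝ) :=
  ∑ α, (O.localSmoother α).compl₁₂ (component O.label α) (component O.label α)

lemma energy_apply (c c' : (ι → κ) → ℝ) :
    O.energy ι c c' = ∑ j, modeProd j O.grad c ⬝ᵥ modeProd j O.grad c' + c ⬝ᵥ c' := by
  simp [energy, dotProductBilin]

lemma localSmoother_apply (α : ι → Bool) (c c' : (ι → κ) → ℝ) :
    O.localSmoother α c c' = ∑ j, (if α j = false then 12 * M ^ 2 * (c ⬝ᵥ c') else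
      modeProd j O.grad c ⬝ᵥ modeProd j O.grad c') + c ⬝ᵥ c' := by
  simp only [localSmoother, LinearMap.add_apply, LinearMap.sum_apply]
  congr 1
  refine Finset.sum_congr rfl fun j _ => ?_
  split_ifs <;> simp [dotProductBilin]

lemma smoother_apply (c c' : (ι → κ) → ℝ) : O.smoother ι c c' =
    ∑ α, O.localSmoother α (component O.label α c) (component O.label α c') := by
  simp [smoother]

lemma energy_self (c : (ι → κ) → ℝ) :
    O.energy ι c c = ∑ j, sqNorm (modeProd j O.grad c) + sqNorm c := O.energy_apply c c

lemma localSmoother_self (α : ι → Bool) (c : (ι → κ) → ℝ) :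
    O.localSmoother α c c = ∑ j, (if α j = false then 12 * M ^ 2 * sqNorm c else
      sqNorm (modeProd j O.grad c)) + sqNorm c := O.localSmoother_apply α c c

lemma isPosSemidef_energy : (O.energy ι).IsPosSemidef where
  eq c c' := by simp only [energy_apply, dotProduct_comm]
  nonneg c := by
    rw [energy_self]
    exact add_nonneg (Finset.sum_nonneg fun j _ => sqNorm_nonneg _) (sqNorm_nonneg _)

lemma sqNorm_grad_le_energy (j : ι) (c : (ι → κ) → ℝ) :
    sqNorm (modeProd j O.grad c) ≤ O.energy ι c c := by
  rw [energy_self]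
  exact le_add_of_le_of_nonneg (Finset.single_le_sum
    (f := fun j => sqNorm (modeProd j O.grad c)) (fun j _ => sqNorm_nonneg _)
    (Finset.mem_univ j)) (sqNorm_nonneg _)

lemma sqNorm_le_localSmoother (α : ι → Bool) (c : (ι → κ) → ℝ) :
    sqNorm c ≤ O.localSmoother α c c := by
  rw [localSmoother_self]
  refine le_add_of_nonneg_left (Finset.sum_nonneg fun j _ => ?_)
  split_ifs
  · exact mul_nonneg (by positivity) (sqNorm_nonneg _)
  · exact sqNorm_nonneg _

lemma sqNorm_le_smoother (c : (ι → κ) → ℝ) : sqNorm c ≤ O.smoother ι c c := by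
  rw [smoother_apply, ← sum_sqNorm_component O.label c]
  exact Finset.sum_le_sum fun α _ => O.sqNorm_le_localSmoother _ _

lemma isPosSemidef_smoother : (O.smoother ι).IsPosSemidef where
  eq c c' := by simp only [smoother_apply, localSmoother_apply, dotProduct_comm]
  nonneg c := (sqNorm_nonneg c).trans (O.sqNorm_le_smoother c)

lemma eq_zero_of_smoother_self_eq_zero (c : (ι → κ) → ℝ) (h : O.smoother ι c c = 0) : c = 0 :=
  eq_zero_of_sqNorm_le_zero ((O.sqNorm_le_smoother c).trans h.le)

lemma smoother_eq_of_localSmoother_eq {φ : ((ι → κ) → ℝ) →ₗ[ℝ] ℝ} {W : (ι → Bool) → (ι → κ) → ℝ}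
    (hW : ∀ α, component O.label α (W α) = W α)
    (hφ : ∀ α z, O.localSmoother α (W α) (component O.label α z) = φ (component O.label α z))
    (z : (ι → κ) → ℝ) : O.smoother ι (∑ α, W α) z = φ z := by
  rw [smoother_apply]
  simp only [component_sum_of_component_eq O.label hW, hφ]
  rw [← map_sum, sum_component]

lemma energy_component_le_localSmoother (α : ι → Bool) (c : (ι → κ) → ℝ) :
    O.energy ι (component O.label α c) (component O.label α c) ≤
      O.localSmoother α (component O.label α c) (component O.label α c) := by
  rw [energy_self, localSmoother_self]
  gcongr with j
  split_ifs with hα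
  · have h := sqNorm_modeProd_component_le O.label α j O.grad (component O.label α c)
    rw [component_component, if_pos rfl, hα] at h
    exact h.trans (sqNorm_modeProd_le_mul_sqNorm j O.inverse_le _)
  · exact le_rfl

lemma energy_le_sum_energy_component (c : (ι → κ) → ℝ) :
    O.energy ι c c ≤ 2 ^ Fintype.card ι *
      ∑ α, O.energy ι (component O.label α c) (component O.label α c) := by
  have card_eq : ((Fintype.card (ι → Bool) : ℕ) : ℝ) = 2 ^ Fintype.card ι := by simp
  have hc := sqNorm_sum_le fun α => component O.label α c
  rw [sum_component, card_eq] at hc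
  have hgrad (j : ι) : sqNorm (modeProd j O.grad c) ≤
      2 ^ Fintype.card ι * ∑ α, sqNorm (modeProd j O.grad (component O.label α c)) := by
    have := sqNorm_sum_le fun α => modeProd j O.grad (component O.label α c)
    rwa [← map_sum, sum_component, card_eq] at this
  simp only [energy_self, Finset.sum_add_distrib]
  rw [Finset.sum_comm, mul_add, Finset.mul_sum]
  exact add_le_add (Finset.sum_le_sum fun j _ => hgrad j) hc

lemma energy_le_smoother (c : (ι → κ) → ℝ) :
    O.energy ι c c ≤ 2 ^ Fintype.card ι * O.smoother ι c c := by
  refine (O.energy_le_sum_energy_component c).trans ?_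
  rw [smoother_apply]
  gcongr with α
  exact O.energy_component_le_localSmoother α c

lemma sqNorm_proj_le (k : ι) (c : (ι → κ) → ℝ) : sqNorm (modeProd k O.proj c) ≤ sqNorm c := by
  simpa using sqNorm_modeProd_le_mul_sqNorm k (C := 1) (by simpa using O.proj_le) c

lemma sqNorm_grad_proj_le (j k : ι) (c : (ι → κ) → ℝ) :
    sqNorm (modeProd j O.grad (modeProd k O.proj c)) ≤ 74 * sqNorm (modeProd j O.grad c) := by
  rcases eq_or_ne j k with rfl | hjk
  · rw [← modeProd_mul]
    exact sqNorm_modeProd_le j O.grad_proj_le c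
  · rw [modeProd_comm hjk]
    linarith [O.sqNorm_proj_le k (modeProd j O.grad c), sqNorm_nonneg (modeProd j O.grad c)]

lemma sqNorm_grad_modeProds_le (j : ι) (l : List ι) (v : (ι → κ) → ℝ) :
    sqNorm (modeProd j O.grad (modeProds O.proj l v)) ≤ 80 ^ l.length * O.energy ι v v := by
  have hv := O.isPosSemidef_energy.nonneg v
  induction l with
  | nil => simpa [modeProds] using O.sqNorm_grad_le_energy j v
  | cons k l ih =>
    have : 0 ≤ 80 ^ l.length * O.energy ι v v := by positivity
    rw [modeProds_cons, List.length_cons, pow_succ]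
    linarith [O.sqNorm_grad_proj_le j k (modeProds O.proj l v)]

lemma sqNorm_sub_modeProds_le (l : List ι) (v : (ι → κ) → ℝ) :
    M ^ 2 * sqNorm (v - modeProds O.proj l v) ≤ 80 ^ l.length * O.energy ι v v := by
  have hM : 0 < M := zero_lt_one.trans_le O.one_le
  have hv := O.isPosSemidef_energy.nonneg v
  induction l with
  | nil => simpa [modeProds, sqNorm] using hv
  | cons k l ih =>
    have split : v - modeProds O.proj (k :: l) v =
        modeProd k (1 - O.proj) v + modeProd k O.proj (v - modeProds O.proj l v) := by
      rw [modeProds_cons, modeProd_sub, modeProd_one, map_sub]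
      abel
    have happrox : M ^ 2 * sqNorm (modeProd k (1 - O.proj) v) ≤ 3 * O.energy ι v v := by
      calc M ^ 2 * sqNorm (modeProd k (1 - O.proj) v)
          ≤ M ^ 2 * (3 / M ^ 2 * sqNorm (modeProd k O.grad v)) := by
            gcongr
            exact sqNorm_modeProd_le k O.approx_le v
        _ = 3 * sqNorm (modeProd k O.grad v) := by field_simp
        _ ≤ 3 * O.energy ι v v := by gcongr; exact O.sqNorm_grad_le_energy k v
    have hproj : M ^ 2 * sqNorm (modeProd k O.proj (v - modeProds O.proj l v)) ≤
        80 ^ l.length * O.energy ι v v := by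
      refine le_trans ?_ ih
      gcongr
      exact O.sqNorm_proj_le k _
    have hsum := mul_le_mul_of_nonneg_left
      (sqNorm_add_le (modeProd k (1 - O.proj) v) (modeProd k O.proj (v - modeProds O.proj l v)))
      (sq_nonneg M)
    have hpow : O.energy ι v v ≤ 80 ^ l.length * O.energy ι v v :=
      le_mul_of_one_le_left hv (one_le_pow₀ (by norm_num))
    rw [split, List.length_cons, pow_succ (80 : ℝ)]
    linarith

variable (ι) in
/-- The quasi-interpolant onto the coarse space: the univariate projector in every direction. -/
def interp : Module.End ℝ ((ι → κ) → ℝ) := modeProds O.proj Finset.univ.toList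

lemma interp_rankOne (y : ι → κ → ℝ) :
    O.interp ι (rankOne y) = rankOne fun j => O.proj.mulVec (y j) := by
  simp [interp, modeProds_rankOne O.proj (Finset.nodup_toList _)]

lemma sqNorm_sub_interp_le (v : (ι → κ) → ℝ) :
    M ^ 2 * sqNorm (v - O.interp ι v) ≤ 80 ^ Fintype.card ι * O.energy ι v v := by
  simpa [interp] using O.sqNorm_sub_modeProds_le Finset.univ.toList v

lemma sqNorm_grad_sub_interp_le (j : ι) (v : (ι → κ) → ℝ) :
    sqNorm (modeProd j O.grad (v - O.interp ι v)) ≤ 4 * 80 ^ Fintype.card ι * O.energy ι v v := by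
  have hinterp : sqNorm (modeProd j O.grad (O.interp ι v)) ≤
      80 ^ Fintype.card ι * O.energy ι v v := by
    simpa [interp] using O.sqNorm_grad_modeProds_le j Finset.univ.toList v
  have hpow : O.energy ι v v ≤ 80 ^ Fintype.card ι * O.energy ι v v :=
    le_mul_of_one_le_left (O.isPosSemidef_energy.nonneg v) (one_le_pow₀ (by norm_num))
  rw [map_sub]
  linarith [sqNorm_sub_le (modeProd j O.grad v) (modeProd j O.grad (O.interp ι v)),
    O.sqNorm_grad_le_energy j v]

lemma localSmoother_component_le (α : ι → Bool) (r : (ι → κ) → ℝ) :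
    O.localSmoother α (component O.label α r) (component O.label α r) ≤
      (12 * M ^ 2 * Fintype.card ι + 1) * sqNorm (component O.label α r) +
        150 * ∑ j, sqNorm (modeProd j O.grad r) := by
  have summand_le (j : ι) : (if α j = false then 12 * M ^ 2 * sqNorm (component O.label α r)
      else sqNorm (modeProd j O.grad (component O.label α r))) ≤
      12 * M ^ 2 * sqNorm (component O.label α r) + 150 * sqNorm (modeProd j O.grad r) := by
    have hr := sqNorm_nonneg (component O.label α r)
    have hgrad := sqNorm_nonneg (modeProd j O.grad r)
    split_ifs with hα
    · linarith
    · have h := sqNorm_modeProd_component_le O.label α j O.grad r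
      rw [Bool.not_eq_false] at hα
      rw [hα] at h
      have : 0 ≤ 12 * M ^ 2 * sqNorm (component O.label α r) := by positivity
      linarith [sqNorm_modeProd_le j O.stable_le r]
  have sum_le := Finset.sum_le_sum fun j (_ : j ∈ Finset.univ) => summand_le j
  rw [Finset.sum_add_distrib, Finset.sum_const, Finset.card_univ, nsmul_eq_mul,
    ← Finset.mul_sum] at sum_le
  rw [localSmoother_self]
  linarith

lemma smoother_le (r : (ι → κ) → ℝ) :
    O.smoother ι r r ≤ (12 * M ^ 2 * Fintype.card ι + 1) * sqNorm r +
      2 ^ Fintype.card ι * (150 * ∑ j, sqNorm (modeProd j O.grad r)) := by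
  rw [smoother_apply]
  refine (Finset.sum_le_sum fun α _ => O.localSmoother_component_le α r).trans_eq ?_
  rw [Finset.sum_add_distrib, ← Finset.mul_sum, sum_sqNorm_component]
  simp

end UnivariateModel

/-- The constant of the approximation property `smoother_sub_interp_le` in dimension `d`. -/
def approxConst (d : ℕ) : ℝ := (1 + (12 + 600 * 2 ^ d) * d) * 80 ^ d

lemma one_le_approxConst (d : ℕ) : 1 ≤ approxConst d :=
  one_le_mul_of_one_le_of_one_le (le_add_of_nonneg_right (by positivity))
    (one_le_pow₀ (by norm_num))

lemma one_div_two_pow_le_approxConst (d : ℕ) : 1 / 2 ^ d ≤ approxConst d :=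
  (div_le_one_of_le₀ (one_le_pow₀ one_le_two) (by positivity)).trans (one_le_approxConst d)

namespace UnivariateModel

variable {κ : Type*} [Fintype κ] [DecidableEq κ] {M : ℝ} (O : UnivariateModel κ M)
  {ι : Type*} [Fintype ι] [DecidableEq ι]

lemma smoother_sub_interp_le (v : (ι → κ) → ℝ) :
    O.smoother ι (v - O.interp ι v) (v - O.interp ι v) ≤
      approxConst (Fintype.card ι) * O.energy ι v v := by
  set r := v - O.interp ι v
  set d := Fintype.card ι
  set E := 80 ^ d * O.energy ι v v
  have hM_sq : M ^ 2 * sqNorm r ≤ E := O.sqNorm_sub_interp_le v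
  have hr : sqNorm r ≤ E :=
    (le_mul_of_one_le_left (sqNorm_nonneg r) (one_le_pow₀ O.one_le)).trans hM_sq
  have hgrad : ∑ j, sqNorm (modeProd j O.grad r) ≤ d * (4 * E) := by
    calc ∑ j, sqNorm (modeProd j O.grad r) ≤ ∑ _j : ι, 4 * E :=
          Finset.sum_le_sum fun j _ =>
            (O.sqNorm_grad_sub_interp_le j v).trans_eq (mul_assoc _ _ _)
      _ = d * (4 * E) := by simp [d]
  calc O.smoother ι r r
      ≤ (12 * M ^ 2 * d + 1) * sqNorm r +
          2 ^ d * (150 * ∑ j, sqNorm (modeProd j O.grad r)) := O.smoother_le r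
    _ = 12 * d * (M ^ 2 * sqNorm r) + sqNorm r +
          2 ^ d * (150 * ∑ j, sqNorm (modeProd j O.grad r)) := by ring
    _ ≤ 12 * d * E + E + 2 ^ d * (150 * (d * (4 * E))) := by gcongr
    _ = approxConst d * O.energy ι v v := by rw [approxConst]; ring

end UnivariateModel

/-! ### Piecewise polynomials -/

section PiecewisePolynomials

open Polynomial

lemma intervalIntegrable_eval (q : ℝ[X]) (a b : ℝ) :
    IntervalIntegrable (fun x => q.eval x) volume a b :=
  q.continuous.intervalIntegrable a b

/-- The integral of a polynomial over `[a, b]`. -/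
def polyIntegral (a b : ℝ) : ℝ[X] →ₗ[ℝ] ℝ where
  toFun q := ∫ x in a..b, q.eval x
  map_add' q r := by
    simp only [eval_add]
    exact intervalIntegral.integral_add (intervalIntegrable_eval q a b)
      (intervalIntegrable_eval r a b)
  map_smul' c q := by simp

lemma polyIntegral_apply (a b : ℝ) (q : ℝ[X]) : polyIntegral a b q = ∫ x in a..b, q.eval x := rfl

lemma polyIntegral_derivative (a b : ℝ) (q : ℝ[X]) :
    polyIntegral a b (derivative q) = q.eval b - q.eval a :=
  intervalIntegral.integral_eq_sub_of_hasDerivAt (fun x _ => q.hasDerivAt x)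
    (intervalIntegrable_eval _ _ _)

/-- The `L²(a, b)` inner product of polynomials. -/
def polyForm (a b : ℝ) : BilinForm ℝ ℝ[X] := (LinearMap.mul ℝ ℝ[X]).compr₂ (polyIntegral a b)

lemma polyForm_apply (a b : ℝ) (q r : ℝ[X]) : polyForm a b q r = polyIntegral a b (q * r) := rfl

lemma isPosSemidef_polyForm {a b : ℝ} (hab : a ≤ b) : (polyForm a b).IsPosSemidef where
  eq q r := by simp only [polyForm_apply, mul_comm]
  nonneg q := intervalIntegral.integral_nonneg hab fun x _ => by
    simpa using mul_self_nonneg (q.eval x)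

lemma eq_zero_of_polyForm_self_eq_zero {a b : ℝ} (hab : a < b) {q : ℝ[X]}
    (h : polyForm a b q q = 0) : q = 0 := by
  by_contra hq
  obtain ⟨c, hc, hqc⟩ : ∃ c ∈ Icc a b, q.eval c ≠ 0 := by
    by_contra! hroot
    exact hq (eq_zero_of_infinite_isRoot q ((Icc_infinite hab).mono hroot))
  have hpos := intervalIntegral.integral_pos hab (f := fun x => (q * q).eval x)
    (q * q).continuous.continuousOn (fun x _ => by simpa using mul_self_nonneg _)
    ⟨c, hc, by simpa using hqc⟩
  exact hpos.ne' h

lemma polyForm_self_mono {a x b : ℝ} (hxb : x ≤ b) (q : ℝ[X]) :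
    polyForm a x q q ≤ polyForm a b q q := by
  have hsplit : polyForm a b q q = polyForm a x q q + polyForm x b q q :=
    (intervalIntegral.integral_add_adjacent_intervals (intervalIntegrable_eval _ _ _)
      (intervalIntegrable_eval _ _ _)).symm
  linarith [(isPosSemidef_polyForm hxb).nonneg q]

lemma sq_eval_sub_eval_le {a x b : ℝ} (hax : a ≤ x) (hxb : x ≤ b) (q : ℝ[X]) :
    (q.eval x - q.eval a) ^ 2 ≤ (b - a) * polyForm a b (derivative q) (derivative q) := by
  have hone : polyForm a x 1 1 = x - a := by simp [polyForm_apply, polyIntegral_apply]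
  calc (q.eval x - q.eval a) ^ 2 = polyForm a x 1 (derivative q) ^ 2 := by
        rw [polyForm_apply, one_mul, polyIntegral_derivative]
    _ ≤ (x - a) * polyForm a x (derivative q) (derivative q) :=
        hone ▸ sq_apply_le_of_isPosSemidef (isPosSemidef_polyForm hax) 1 (derivative q)
    _ ≤ (b - a) * polyForm a b (derivative q) (derivative q) := by
        gcongr
        · exact (isPosSemidef_polyForm hax).nonneg _
        · linarith
        · exact polyForm_self_mono hxb _

lemma polyForm_self_le_of_sq_eval_le {a b K : ℝ} (hab : a ≤ b) {q : ℝ[X]}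
    (h : ∀ x ∈ Icc a b, q.eval x ^ 2 ≤ K) : polyForm a b q q ≤ (b - a) * K :=
  calc polyForm a b q q ≤ polyIntegral a b (C K) :=
        intervalIntegral.integral_mono_on hab (intervalIntegrable_eval _ _ _)
          (intervalIntegrable_eval _ _ _) fun x hx => by simpa [sq] using h x hx
    _ = (b - a) * K := by simp [polyIntegral_apply]

lemma polyForm_derivative_le_of_natDegree_le_one {a b : ℝ} (hab : a ≤ b) {q : ℝ[X]}
    (hq : q.natDegree ≤ 1) :
    (b - a) ^ 2 * polyForm a b (derivative q) (derivative q) ≤ 12 * polyForm a b q q := by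
  obtain ⟨α, β, rfl⟩ := exists_eq_X_add_C_of_natDegree_le_one hq
  set γ := α * a + β with hγ
  have sq_eq : (C α * X + C β) * (C α * X + C β) =
      derivative (C (α ^ 2 / 3) * (X - C a) ^ 3 + C (α * γ) * (X - C a) ^ 2 + C (γ ^ 2) * X) := by
    apply Polynomial.funext
    intro x
    simp only [eval_mul, eval_add, eval_C, eval_X, derivative_add, derivative_mul, derivative_C,
      derivative_X_sub_C_pow, derivative_X, eval_pow, eval_sub, eval_zero, eval_one,
      hγ]
    ring
  have sq_derivative_eq : derivative (C α * X + C β) * derivative (C α * X + C β) =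
      derivative (C (α ^ 2) * X) := by
    simp [sq]
  rw [polyForm_apply, polyForm_apply, sq_eq, sq_derivative_eq, polyIntegral_derivative,
    polyIntegral_derivative]
  simp only [eval_add, eval_mul, eval_C, eval_X, eval_pow, eval_sub]
  have : 0 ≤ (b - a) * (α * (b - a) + 2 * γ) ^ 2 := mul_nonneg (sub_nonneg.2 hab) (sq_nonneg _)
  nlinarith

lemma exists_derivative_eq (q : ℝ[X]) : ∃ r : ℝ[X], derivative r = q := by
  induction q using Polynomial.induction_on' with
  | add q₁ q₂ h₁ h₂ =>
    obtain ⟨r₁, rfl⟩ := h₁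
    obtain ⟨r₂, rfl⟩ := h₂
    exact ⟨r₁ + r₂, derivative_add⟩
  | monomial n a =>
    refine ⟨monomial (n + 1) (a / (n + 1)), ?_⟩
    have : (n : ℝ) + 1 ≠ 0 := by positivity
    rw [derivative_monomial]
    simp [this]

/-- The `j`-th knot of the uniform partition of `[0, 1]` into `m` intervals. -/
def knot (m j : ℕ) : ℝ := j / m

lemma knot_zero (m : ℕ) : knot m 0 = 0 := by simp [knot]

lemma knot_succ (m j : ℕ) : knot m (j + 1) = ((j : ℝ) + 1) / m := by simp [knot]

lemma knot_self {m : ℕ} (hm : 0 < m) : knot m m = 1 := div_self (by positivity)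

lemma knot_succ_sub (m j : ℕ) : knot m (j + 1) - knot m j = 1 / m := by
  rw [knot_succ, knot]; ring

lemma knot_le_knot_succ (m j : ℕ) : knot m j ≤ knot m (j + 1) := by
  rw [← sub_nonneg, knot_succ_sub]; positivity

lemma knot_lt_knot_succ {m : ℕ} (hm : 0 < m) (j : ℕ) : knot m j < knot m (j + 1) := by
  rw [← sub_pos, knot_succ_sub]; positivity

/-- Piecewise polynomials: entry `j` is the polynomial on the `j`-th interval. On the partition into
`m` intervals only the entries `j < m` are relevant. -/
abbrev PiecewisePoly := ℕ → ℝ[X]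

/-- The `L²(0, 1)` inner product of piecewise polynomials on `m` intervals. -/
def l2Form (m : ℕ) : BilinForm ℝ PiecewisePoly :=
  ∑ j ∈ Finset.range m,
    (polyForm (knot m j) (knot m (j + 1))).compl₁₂ (LinearMap.proj j) (LinearMap.proj j)

lemma l2Form_apply (m : ℕ) (q r : PiecewisePoly) :
    l2Form m q r = ∑ j ∈ Finset.range m, polyForm (knot m j) (knot m (j + 1)) (q j) (r j) := by
  simp [l2Form]

lemma isPosSemidef_l2Form (m : ℕ) : (l2Form m).IsPosSemidef where
  eq q r := by
    simp only [l2Form_apply]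
    exact Finset.sum_congr rfl fun j _ => (isPosSemidef_polyForm (knot_le_knot_succ m j)).eq _ _
  nonneg q := by
    rw [l2Form_apply]
    exact Finset.sum_nonneg fun j _ => (isPosSemidef_polyForm (knot_le_knot_succ m j)).nonneg _

lemma l2Form_self_nonneg (m : ℕ) (q : PiecewisePoly) : 0 ≤ l2Form m q q :=
  (isPosSemidef_l2Form m).nonneg q

/-- The piecewise polynomials whose irrelevant entries vanish, on which `l2Form m` is definite. -/
def vanishFrom (m : ℕ) : Submodule ℝ PiecewisePoly where
  carrier := {q | ∀ j, m ≤ j → q j = 0}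
  add_mem' hq hr j hj := by simp [hq j hj, hr j hj]
  zero_mem' _ _ := rfl
  smul_mem' c q hq j hj := by simp [hq j hj]

/-- The piecewise polynomials which are continuous at the interior knots. -/
def continuousPieces (m : ℕ) : Submodule ℝ PiecewisePoly where
  carrier := {q | ∀ j, j + 1 < m →
    (q j).eval (knot m (j + 1)) = (q (j + 1)).eval (knot m (j + 1))}
  add_mem' hq hr j hj := by simp [hq j hj, hr j hj]
  zero_mem' j _ := by simp
  smul_mem' c q hq j hj := by simp [hq j hj]

/-- The piecewise derivative. -/
def pieceDeriv : Module.End ℝ PiecewisePoly := LinearMap.pi fun j => derivative ∘ₗ LinearMap.proj j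

lemma pieceDeriv_apply (q : PiecewisePoly) (j : ℕ) : pieceDeriv q j = derivative (q j) := rfl

lemma pieceDeriv_pow_apply (k : ℕ) (q : PiecewisePoly) (j : ℕ) :
    (pieceDeriv ^ k) q j = derivative^[k] (q j) := by
  induction k generalizing q with
  | zero => rfl
  | succ k ih => rw [pow_succ, Function.iterate_succ_apply, Module.End.mul_apply, ih]; rfl

/-- The value at the left endpoint `0`. -/
def evalZero : PiecewisePoly →ₗ[ℝ] ℝ := leval 0 ∘ₗ LinearMap.proj 0

/-- The value at the right endpoint `1`. -/
def evalOne (m : ℕ) : PiecewisePoly →ₗ[ℝ] ℝ := leval 1 ∘ₗ LinearMap.proj (m - 1)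

lemma evalZero_apply (q : PiecewisePoly) : evalZero q = (q 0).eval 0 := rfl

lemma evalOne_apply (m : ℕ) (q : PiecewisePoly) : evalOne m q = (q (m - 1)).eval 1 := rfl

/-- The constant function `1` on `m` intervals. -/
def oneOn (m : ℕ) : PiecewisePoly := fun j => if j < m then 1 else 0

lemma oneOn_mem_vanishFrom (m : ℕ) : oneOn m ∈ vanishFrom m := fun j hj => by simp [oneOn, hj]

lemma oneOn_mem_continuousPieces (m : ℕ) : oneOn m ∈ continuousPieces m := fun j hj => by
  simp [oneOn, hj, j.lt_succ_self.trans hj]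

lemma pieceDeriv_oneOn (m : ℕ) : pieceDeriv (oneOn m) = 0 := by
  ext1 j
  simp only [pieceDeriv_apply, oneOn]
  split_ifs <;> simp

lemma eq_zero_of_l2Form_self_eq_zero {m : ℕ} {q : PiecewisePoly} (hq : q ∈ vanishFrom m)
    (h : l2Form m q q = 0) : q = 0 := by
  rw [l2Form_apply, Finset.sum_eq_zero_iff_of_nonneg fun j _ =>
    (isPosSemidef_polyForm (knot_le_knot_succ m j)).nonneg _] at h
  ext1 j
  rcases lt_or_ge j m with hj | hj
  · exact eq_zero_of_polyForm_self_eq_zero (knot_lt_knot_succ (Nat.zero_lt_of_lt hj) j)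
      (h j (Finset.mem_range.2 hj))
  · exact hq j hj

lemma sum_range_eval_sub_eval (t : ℕ → ℝ) (F : ℕ → ℝ[X]) (n : ℕ)
    (hF : ∀ j < n, (F j).eval (t (j + 1)) = (F (j + 1)).eval (t (j + 1))) :
    ∑ j ∈ Finset.range (n + 1), ((F j).eval (t (j + 1)) - (F j).eval (t j)) =
      (F n).eval (t (n + 1)) - (F 0).eval (t 0) := by
  induction n with
  | zero => simp
  | succ n ih =>
    rw [Finset.sum_range_succ, ih fun j hj => hF j (hj.trans n.lt_succ_self),
      hF n n.lt_succ_self]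
    ring

lemma l2Form_pieceDeriv_add {m : ℕ} (hm : 0 < m) {q r : PiecewisePoly}
    (hq : q ∈ continuousPieces m) (hr : r ∈ continuousPieces m) :
    l2Form m (pieceDeriv q) r + l2Form m q (pieceDeriv r) =
      evalOne m q * evalOne m r - evalZero q * evalZero r := by
  have htelescope := sum_range_eval_sub_eval (knot m) (q * r) (m - 1) fun j hj => by
    have hj : j + 1 < m := by omega
    simp only [Pi.mul_apply, eval_mul, hq j hj, hr j hj]
  rw [Nat.sub_add_cancel hm, knot_self hm, knot_zero] at htelescope
  simp only [evalOne_apply, evalZero_apply, ← eval_mul, ← Pi.mul_apply]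
  rw [← htelescope, l2Form_apply, l2Form_apply, ← Finset.sum_add_distrib]
  refine Finset.sum_congr rfl fun j _ => ?_
  rw [← polyIntegral_derivative, Pi.mul_apply, derivative_mul, map_add]
  rfl

lemma l2Form_pieceDeriv_oneOn {m : ℕ} (hm : 0 < m) {q : PiecewisePoly}
    (hq : q ∈ continuousPieces m) :
    l2Form m (pieceDeriv q) (oneOn m) = evalOne m q - evalZero q := by
  have h := l2Form_pieceDeriv_add hm hq (oneOn_mem_continuousPieces m)
  simpa [pieceDeriv_oneOn, evalOne_apply, evalZero_apply, oneOn, hm] using h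

lemma l2Form_oneOn_oneOn {m : ℕ} (hm : 0 < m) : l2Form m (oneOn m) (oneOn m) = 1 := by
  have hX := l2Form_pieceDeriv_oneOn hm (q := fun _ => X) fun j _ => rfl
  rw [evalOne_apply, evalZero_apply, eval_X, eval_X, sub_zero] at hX
  rw [← hX, l2Form_apply, l2Form_apply]
  refine Finset.sum_congr rfl fun j hj => ?_
  simp [pieceDeriv_apply, oneOn, Finset.mem_range.1 hj]

lemma exists_continuous_primitive {m : ℕ} (hm : 0 < m) {q : PiecewisePoly}
    (hq : q ∈ vanishFrom m) :
    ∃ r ∈ vanishFrom m ⊓ continuousPieces m, pieceDeriv r = q ∧ evalZero r = 0 := by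
  choose A hA using exists_derivative_eq
  let shift : ℕ → ℝ := fun j => ∑ i ∈ Finset.range j,
    ((A (q i)).eval (knot m (i + 1)) - (A (q i)).eval (knot m i))
  let r : PiecewisePoly := fun j =>
    if j < m then A (q j) - C ((A (q j)).eval (knot m j)) + C (shift j) else 0
  have r_eq {j : ℕ} (hj : j < m) : r j = A (q j) - C ((A (q j)).eval (knot m j)) + C (shift j) :=
    if_pos hj
  refine ⟨r, ⟨fun j hj => if_neg hj.not_gt, fun j hj => ?_⟩, ?_, ?_⟩
  · simp only [r_eq hj, r_eq (j.lt_succ_self.trans hj), eval_add, eval_sub, eval_C, shift,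
      Finset.sum_range_succ]
    ring
  · ext1 j
    rcases lt_or_ge j m with hj | hj
    · simp [pieceDeriv_apply, r_eq hj, hA]
    · rw [pieceDeriv_apply, show r j = 0 from if_neg hj.not_gt, derivative_zero, hq j hj]
  · simp [evalZero_apply, r_eq hm, knot_zero, shift]

end PiecewisePolynomials

/-! ### Splines as piecewise polynomials: approximation and inverse inequalities -/

section Splines

open Polynomial

variable {m p : ℕ} {b : Bool}

/-- The boundary conditions of the alternating duality argument: `true` imposes nothing, `false`
imposes vanishing endpoint values. -/
def endpointCond (m : ℕ) : Bool → Submodule ℝ PiecewisePoly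
  | true => ⊤
  | false => LinearMap.ker evalZero ⊓ LinearMap.ker (evalOne m)

/-- The continuous piecewise polynomials satisfying the boundary conditions `b`. -/
def h1Pieces (m : ℕ) (b : Bool) : Submodule ℝ PiecewisePoly :=
  vanishFrom m ⊓ continuousPieces m ⊓ endpointCond m b

lemma oneOn_mem_h1Pieces (m : ℕ) : oneOn m ∈ h1Pieces m true :=
  ⟨⟨oneOn_mem_vanishFrom m, oneOn_mem_continuousPieces m⟩, Submodule.mem_top⟩

lemma l2Form_pieceDeriv_eq_neg (hm : 0 < m) {w φ : PiecewisePoly} (hw : w ∈ h1Pieces m b)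
    (hφ : φ ∈ h1Pieces m (!b)) : l2Form m (pieceDeriv w) φ = -l2Form m w (pieceDeriv φ) := by
  have hibp := l2Form_pieceDeriv_add hm hw.1.2 hφ.1.2
  have hboundary : evalOne m w * evalOne m φ - evalZero w * evalZero φ = 0 := by
    cases b with
    | true => rw [LinearMap.mem_ker.1 hφ.2.1, LinearMap.mem_ker.1 hφ.2.2]; simp
    | false => rw [LinearMap.mem_ker.1 hw.2.1, LinearMap.mem_ker.1 hw.2.2]; simp
  linarith

lemma l2Form_pieceDeriv_oneOn_eq_zero (hm : 0 < m) {u : PiecewisePoly}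
    (hu : u ∈ h1Pieces m false) : l2Form m (pieceDeriv u) (oneOn m) = 0 := by
  rw [l2Form_pieceDeriv_eq_neg hm hu (oneOn_mem_h1Pieces m), pieceDeriv_oneOn, map_zero, neg_zero]

lemma exists_primitive_mem_h1Pieces (hm : 0 < m) {q : PiecewisePoly} (hq : q ∈ vanishFrom m)
    (hmean : b = false → l2Form m q (oneOn m) = 0) (c : ℝ) :
    ∃ s ∈ h1Pieces m b, pieceDeriv s = q ∧ (b = true → l2Form m s (oneOn m) = c) := by
  obtain ⟨r, hr, hDr, hr0⟩ := exists_continuous_primitive hm hq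
  cases b with
  | true =>
    refine ⟨r + (c - l2Form m r (oneOn m)) • oneOn m, add_mem ⟨hr, Submodule.mem_top⟩
      (Submodule.smul_mem _ _ (oneOn_mem_h1Pieces m)), ?_, fun _ => ?_⟩
    · rw [map_add, map_smul, pieceDeriv_oneOn, smul_zero, add_zero, hDr]
    · rw [map_add, LinearMap.add_apply, map_smul, LinearMap.smul_apply, l2Form_oneOn_oneOn hm,
        smul_eq_mul]
      ring
  | false =>
    have hr1 : evalOne m r = 0 := by
      have h := l2Form_pieceDeriv_oneOn hm hr.2
      rw [hDr, hmean rfl, hr0, sub_zero] at h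
      exact h.symm
    exact ⟨r, ⟨hr, LinearMap.mem_ker.2 hr0, LinearMap.mem_ker.2 hr1⟩, hDr, nofun⟩

/-- The piecewise polynomials on the coarse partition, whose intervals are the unions of the
intervals `2 i` and `2 i + 1`. -/
def coarsePieces : Submodule ℝ PiecewisePoly where
  carrier := {q | ∀ i, q (2 * i + 1) = q (2 * i)}
  add_mem' hq hr i := by simp [hq i, hr i]
  zero_mem' _ := rfl
  smul_mem' c q hq i := by simp [hq i]

/-- The coarse splines of degree `p` whose derivatives of orders `0, 1, …, p - 1` satisfy the
boundary conditions `b, !b, b, …`; for `b = true` the odd derivatives vanish at the endpoints. -/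
def coarseSplines (m : ℕ) : ℕ → Bool → Submodule ℝ PiecewisePoly
  | 0, _ => vanishFrom m ⊓ coarsePieces ⊓ LinearMap.ker pieceDeriv
  | p + 1, b => h1Pieces m b ⊓ (coarseSplines m p (!b)).comap pieceDeriv

lemma coarseSplines_le_vanishFrom : coarseSplines m p b ≤ vanishFrom m := by
  cases p with
  | zero => exact fun q hq => hq.1.1
  | succ p => exact fun q hq => hq.1.1.1

lemma natDegree_le_of_mem_coarseSplines {q : PiecewisePoly} (hq : q ∈ coarseSplines m p b)
    (j : ℕ) : (q j).natDegree ≤ p := by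
  induction p generalizing b q with
  | zero => exact (derivative_eq_zero.1 (congrFun (LinearMap.mem_ker.1 hq.2) j)).le
  | succ p ih =>
    have h := ih hq.2
    rw [pieceDeriv_apply, natDegree_derivative] at h
    omega

lemma coarseSplines_le_coarsePieces (hm : 2 ∣ m) : coarseSplines m p b ≤ coarsePieces := by
  induction p generalizing b with
  | zero => exact fun q hq => hq.1.2
  | succ p ih =>
    intro q hq i
    rcases lt_or_ge (2 * i + 1) m with hi | hi
    · have hderiv : derivative (q (2 * i + 1) - q (2 * i)) = 0 := by
        rw [derivative_sub, sub_eq_zero]; exact ih hq.2 i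
      obtain ⟨c, hc⟩ := natDegree_eq_zero.1 (derivative_eq_zero.1 hderiv)
      have hc_eval := congrArg (eval (knot m (2 * i + 1))) hc
      rw [eval_sub, ← hq.1.1.2 (2 * i) hi, sub_self, eval_C] at hc_eval
      rw [hc_eval, map_zero] at hc
      exact sub_eq_zero.1 hc.symm
    · have hq := coarseSplines_le_vanishFrom hq
      rw [hq _ hi, hq _ (by omega)]

lemma oneOn_mem_coarseSplines (hm : 2 ∣ m) (p : ℕ) : oneOn m ∈ coarseSplines m p true := by
  cases p with
  | zero =>
    refine ⟨⟨oneOn_mem_vanishFrom m, fun i => ?_⟩, LinearMap.mem_ker.2 (pieceDeriv_oneOn m)⟩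
    have : 2 * i + 1 < m ↔ 2 * i < m := by omega
    simp only [oneOn, this]
  | succ p =>
    exact ⟨oneOn_mem_h1Pieces m, Submodule.mem_comap.2 (by simp [pieceDeriv_oneOn])⟩

/-- The piecewise polynomials of degree at most `p` on `m` intervals. -/
def boundedDegree (m p : ℕ) : Submodule ℝ PiecewisePoly where
  carrier := {q | q ∈ vanishFrom m ∧ ∀ j, (q j).natDegree ≤ p}
  add_mem' hq hr := ⟨add_mem hq.1 hr.1, fun j =>
    (natDegree_add_le _ _).trans (max_le (hq.2 j) (hr.2 j))⟩
  zero_mem' := ⟨zero_mem _, fun _ => by simp⟩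
  smul_mem' c _ hq := ⟨Submodule.smul_mem _ c hq.1, fun j => (natDegree_smul_le _ _).trans (hq.2 j)⟩

instance finiteDimensional_boundedDegree (m p : ℕ) : FiniteDimensional ℝ (boundedDegree m p) := by
  let coeffs : PiecewisePoly →ₗ[ℝ] (Fin m → Fin (p + 1) → ℝ) :=
    LinearMap.pi fun j => LinearMap.pi fun i => lcoeff ℝ i ∘ₗ LinearMap.proj (j : ℕ)
  refine FiniteDimensional.of_injective (coeffs ∘ₗ (boundedDegree m p).subtype) ?_
  rw [← LinearMap.ker_eq_bot, LinearMap.ker_eq_bot']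
  intro q hq
  ext j i
  rcases lt_or_ge j m with hj | hj
  · rcases lt_or_ge i (p + 1) with hi | hi
    · exact congrFun (congrFun hq ⟨j, hj⟩) ⟨i, hi⟩
    · exact coeff_eq_zero_of_natDegree_lt ((q.2.2 j).trans_lt hi)
  · exact congrArg (coeff · i) (q.2.1 j hj)

lemma coarseSplines_le_boundedDegree : coarseSplines m p b ≤ boundedDegree m p := fun _ hq =>
  ⟨coarseSplines_le_vanishFrom hq, natDegree_le_of_mem_coarseSplines hq⟩

instance finiteDimensional_coarseSplines (m p : ℕ) (b : Bool) :
    FiniteDimensional ℝ (coarseSplines m p b) :=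
  Submodule.finiteDimensional_of_le coarseSplines_le_boundedDegree

lemma polyForm_sub_const_add_le {a c e δ : ℝ} (hδ : 0 ≤ δ) (hac : c - a = δ) (hce : e - c = δ)
    {q r : ℝ[X]} (hqr : q.eval c = r.eval c) :
    polyForm a c (q - C (q.eval a)) (q - C (q.eval a)) +
        polyForm c e (r - C (q.eval a)) (r - C (q.eval a)) ≤
      3 * δ ^ 2 * (polyForm a c (derivative q) (derivative q) +
        polyForm c e (derivative r) (derivative r)) := by
  have hac' : a ≤ c := by linarith
  have hce' : c ≤ e := by linarith
  set A := polyForm a c (derivative q) (derivative q)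
  set B := polyForm c e (derivative r) (derivative r)
  have hB : 0 ≤ δ ^ 2 * B := mul_nonneg (sq_nonneg δ) ((isPosSemidef_polyForm hce').nonneg _)
  have hleft := polyForm_self_le_of_sq_eval_le hac' (q := q - C (q.eval a)) (K := δ * A)
    fun x hx => by simpa [hac] using sq_eval_sub_eval_le hx.1 hx.2 q
  have hright := polyForm_self_le_of_sq_eval_le hce' (q := r - C (q.eval a))
    (K := 2 * (δ * B + δ * A)) fun x hx => by
      have hc := sq_eval_sub_eval_le hac' le_rfl q
      have hx := sq_eval_sub_eval_le hx.1 hx.2 r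
      rw [hac, hqr] at hc
      rw [hce] at hx
      have hsum := add_sq_le (a := r.eval x - r.eval c) (b := r.eval c - q.eval a)
      rw [sub_add_sub_cancel] at hsum
      rw [eval_sub, eval_C]
      linarith
  rw [hac] at hleft
  rw [hce] at hright
  linarith

/-- The piecewise constant interpolant on the coarse partition, at the left ends of its
intervals. -/
def leftInterp (m : ℕ) (u : PiecewisePoly) : PiecewisePoly := fun j =>
  if j < m then C ((u (2 * (j / 2))).eval (knot m (2 * (j / 2)))) else 0

lemma leftInterp_mem_coarseSplines (hm : 2 ∣ m) (u : PiecewisePoly) (b : Bool) :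
    leftInterp m u ∈ coarseSplines m 0 b := by
  refine ⟨⟨fun j hj => if_neg hj.not_gt, fun i => ?_⟩, ?_⟩
  · have hlt : 2 * i + 1 < m ↔ 2 * i < m := by omega
    have hdiv : (2 * i + 1) / 2 = 2 * i / 2 := by omega
    simp only [leftInterp, hlt, hdiv]
  · refine LinearMap.mem_ker.2 (funext fun j => ?_)
    simp only [pieceDeriv_apply, leftInterp]
    split_ifs <;> simp

lemma sum_range_two_mul (f : ℕ → ℝ) (n : ℕ) :
    ∑ j ∈ Finset.range (2 * n), f j = ∑ i ∈ Finset.range n, (f (2 * i) + f (2 * i + 1)) := by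
  induction n with
  | zero => simp
  | succ n ih =>
    rw [Nat.mul_succ, Finset.sum_range_succ, Finset.sum_range_succ, ih, Finset.sum_range_succ,
      add_assoc]

lemma l2Form_sub_leftInterp_le (hm : 2 ∣ m) {u : PiecewisePoly} (hu : u ∈ continuousPieces m) :
    l2Form m (u - leftInterp m u) (u - leftInterp m u) ≤
      3 / (m : ℝ) ^ 2 * l2Form m (pieceDeriv u) (pieceDeriv u) := by
  obtain ⟨n, hn⟩ := hm
  rw [l2Form_apply, l2Form_apply, show Finset.range m = Finset.range (2 * n) by rw [hn],
    sum_range_two_mul, sum_range_two_mul, Finset.mul_sum]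
  refine Finset.sum_le_sum fun i hi => ?_
  have hi : i < n := Finset.mem_range.1 hi
  have hleft : leftInterp m u (2 * i) = C ((u (2 * i)).eval (knot m (2 * i))) := by
    rw [leftInterp, if_pos (by omega), Nat.mul_div_cancel_left i two_pos]
  have hright : leftInterp m u (2 * i + 1) = C ((u (2 * i)).eval (knot m (2 * i))) := by
    rw [leftInterp, if_pos (by omega), show (2 * i + 1) / 2 = i by omega]
  simp only [Pi.sub_apply, hleft, hright, pieceDeriv_apply]
  refine (polyForm_sub_const_add_le (by positivity) (knot_succ_sub m (2 * i))
    (knot_succ_sub m (2 * i + 1)) (hu (2 * i) (by omega))).trans_eq ?_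
  ring

/-- Aubin–Nitsche: test the error `w` with `w = φ′` and integrate by parts. -/
lemma l2Form_self_le_of_duality (hm : 0 < m) {G : Submodule ℝ PiecewisePoly} {ε : ℝ} (hε : 0 ≤ ε)
    (happrox : ∀ φ ∈ h1Pieces m (!b), ∃ g ∈ G,
      l2Form m (φ - g) (φ - g) ≤ ε * l2Form m (pieceDeriv φ) (pieceDeriv φ))
    {w : PiecewisePoly} (hw : w ∈ h1Pieces m b) (hmean : b = true → l2Form m w (oneOn m) = 0)
    (horth : ∀ g ∈ G, l2Form m (pieceDeriv w) g = 0) :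
    l2Form m w w ≤ ε * l2Form m (pieceDeriv w) (pieceDeriv w) := by
  obtain ⟨φ, hφ, hDφ, -⟩ := exists_primitive_mem_h1Pieces (b := !b) hm hw.1.1
    (fun h => hmean (by simpa using h)) 0
  obtain ⟨g, hg, hφg⟩ := happrox φ hφ
  have hww : l2Form m w w = -l2Form m (pieceDeriv w) (φ - g) := by
    rw [map_sub, horth g hg, sub_zero, l2Form_pieceDeriv_eq_neg hm hw hφ, hDφ, neg_neg]
  refine le_of_sq_le_mul_self (mul_nonneg hε (l2Form_self_nonneg m _)) ?_
  calc l2Form m w w ^ 2 = l2Form m (pieceDeriv w) (φ - g) ^ 2 := by rw [hww, neg_sq]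
    _ ≤ l2Form m (pieceDeriv w) (pieceDeriv w) * l2Form m (φ - g) (φ - g) :=
        sq_apply_le_of_isPosSemidef (isPosSemidef_l2Form m) _ _
    _ ≤ l2Form m (pieceDeriv w) (pieceDeriv w) * (ε * l2Form m w w) := by
        rw [hDφ] at hφg
        exact mul_le_mul_of_nonneg_left hφg (l2Form_self_nonneg m _)
    _ = ε * l2Form m (pieceDeriv w) (pieceDeriv w) * l2Form m w w := by ring

lemma exists_mem_coarseSplines_succ_approx (hm : 2 ∣ m) (hm0 : 0 < m) {ε : ℝ} (hε : 0 ≤ ε)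
    (happrox : ∀ φ ∈ h1Pieces m (!b), ∃ g ∈ coarseSplines m p (!b),
      l2Form m (φ - g) (φ - g) ≤ ε * l2Form m (pieceDeriv φ) (pieceDeriv φ))
    {u : PiecewisePoly} (hu : u ∈ h1Pieces m b) :
    ∃ s ∈ coarseSplines m (p + 1) b,
      l2Form m (u - s) (u - s) ≤ ε * l2Form m (pieceDeriv u) (pieceDeriv u) ∧
      l2Form m (pieceDeriv s) (pieceDeriv s) ≤ l2Form m (pieceDeriv u) (pieceDeriv u) := by
  obtain ⟨s', hs', horth⟩ := exists_mem_forall_bilinForm_sub_eq_zero (l2Form m)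
    (coarseSplines m p (!b))
    (fun x hx => eq_zero_of_l2Form_self_eq_zero (coarseSplines_le_vanishFrom hx)) (pieceDeriv u)
  have hs'_mean : b = false → l2Form m s' (oneOn m) = 0 := by
    rintro rfl
    have h := horth (oneOn m) (oneOn_mem_coarseSplines hm p)
    rwa [map_sub, LinearMap.sub_apply, l2Form_pieceDeriv_oneOn_eq_zero hm0 hu, zero_sub,
      neg_eq_zero] at h
  obtain ⟨s, hs, rfl, hs_mean⟩ := exists_primitive_mem_h1Pieces hm0
    (coarseSplines_le_vanishFrom hs') hs'_mean (l2Form m u (oneOn m))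
  have hpyth := apply_self_eq_add_of_apply_sub_eq_zero (isPosSemidef_l2Form m).isSymm
    (horth _ hs')
  have hdual := l2Form_self_le_of_duality hm0 hε happrox (sub_mem hu hs)
    (fun hb => by rw [map_sub, LinearMap.sub_apply, hs_mean hb, sub_self])
    (by simpa only [map_sub] using horth)
  rw [map_sub pieceDeriv] at hdual
  have hpos := l2Form_self_nonneg m (pieceDeriv u - pieceDeriv s)
  have hpos' := l2Form_self_nonneg m (pieceDeriv s)
  exact ⟨s, ⟨hs, hs'⟩, hdual.trans (by gcongr; linarith), by linarith⟩

lemma exists_mem_coarseSplines_approx (hm : 2 ∣ m) (hm0 : 0 < m) {u : PiecewisePoly}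
    (hu : u ∈ h1Pieces m b) : ∃ g ∈ coarseSplines m p b,
      l2Form m (u - g) (u - g) ≤ 3 / (m : ℝ) ^ 2 * l2Form m (pieceDeriv u) (pieceDeriv u) := by
  induction p generalizing b u with
  | zero => exact ⟨_, leftInterp_mem_coarseSplines hm u b, l2Form_sub_leftInterp_le hm hu.1.2⟩
  | succ p ih =>
    obtain ⟨s, hs, happrox, -⟩ := exists_mem_coarseSplines_succ_approx hm hm0 (by positivity)
      (fun _ hφ => ih hφ) hu
    exact ⟨s, hs, happrox⟩

/-- The splines of degree `p` and smoothness `C^{p-1}` on `m` intervals. -/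
def splines (m p : ℕ) : Submodule ℝ PiecewisePoly :=
  boundedDegree m p ⊓ ⨅ (k : ℕ) (_ : k < p), (continuousPieces m).comap (pieceDeriv ^ k)

/-- The space `S₀` of splines whose odd derivatives of order less than `p` vanish at the
endpoints. -/
def neumannSplines (m p : ℕ) : Submodule ℝ PiecewisePoly :=
  boundedDegree m p ⊓ ⨅ (k : ℕ) (_ : k < p), (h1Pieces m (not^[k] true)).comap (pieceDeriv ^ k)

lemma mem_splines {q : PiecewisePoly} : q ∈ splines m p ↔
    q ∈ boundedDegree m p ∧ ∀ k < p, (pieceDeriv ^ k) q ∈ continuousPieces m := by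
  simp [splines, Submodule.mem_iInf]

lemma mem_neumannSplines {q : PiecewisePoly} : q ∈ neumannSplines m p ↔
    q ∈ boundedDegree m p ∧ ∀ k < p, (pieceDeriv ^ k) q ∈ h1Pieces m (not^[k] true) := by
  simp [neumannSplines, Submodule.mem_iInf]

lemma splines_le_boundedDegree : splines m p ≤ boundedDegree m p := inf_le_left

instance finiteDimensional_splines (m p : ℕ) : FiniteDimensional ℝ (splines m p) :=
  Submodule.finiteDimensional_of_le splines_le_boundedDegree

lemma neumannSplines_le_splines : neumannSplines m p ≤ splines m p := fun _ hq =>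
  mem_splines.2 ⟨hq.1, fun k hk => ((mem_neumannSplines.1 hq).2 k hk).1.2⟩

lemma splines_le_h1Pieces (hp : 1 ≤ p) : splines m p ≤ h1Pieces m true := fun _ hq =>
  ⟨⟨hq.1.1, (mem_splines.1 hq).2 0 hp⟩, Submodule.mem_top⟩

lemma pieceDeriv_pow_mem_coarseSplines {k r : ℕ} {q : PiecewisePoly}
    (hq : q ∈ coarseSplines m (r + k) b) : (pieceDeriv ^ k) q ∈ coarseSplines m r (not^[k] b) := by
  induction k generalizing b q with
  | zero => exact hq
  | succ k ih =>
    rw [pow_succ, Module.End.mul_apply, Function.iterate_succ_apply]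
    exact ih hq.2

lemma coarseSplines_le_neumannSplines : coarseSplines m p true ≤ neumannSplines m p := by
  refine fun q hq => mem_neumannSplines.2 ⟨coarseSplines_le_boundedDegree hq, fun k hk => ?_⟩
  obtain ⟨r, rfl⟩ : ∃ r, p = (r + 1) + k := ⟨p - k - 1, by omega⟩
  exact (pieceDeriv_pow_mem_coarseSplines hq).1

lemma l2Form_pieceDeriv_le_of_natDegree_le_one (hm : 0 < m) {q : PiecewisePoly}
    (hq : ∀ j, (q j).natDegree ≤ 1) :
    l2Form m (pieceDeriv q) (pieceDeriv q) ≤ 12 * (m : ℝ) ^ 2 * l2Form m q q := by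
  rw [l2Form_apply, l2Form_apply, Finset.mul_sum]
  refine Finset.sum_le_sum fun j _ => ?_
  have h := polyForm_derivative_le_of_natDegree_le_one (knot_le_knot_succ m j) (hq j)
  rw [knot_succ_sub, one_div_pow, one_div_mul_eq_div, div_le_iff₀ (by positivity)] at h
  rw [pieceDeriv_apply]
  linarith

lemma l2Form_pieceDeriv_le_of_le (hm : 0 < m) {C : ℝ} (hC : 0 ≤ C) {q : PiecewisePoly}
    (hq : q ∈ h1Pieces m b) (hDq : pieceDeriv q ∈ h1Pieces m (!b))
    (h : l2Form m (pieceDeriv (pieceDeriv q)) (pieceDeriv (pieceDeriv q)) ≤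
      C * l2Form m (pieceDeriv q) (pieceDeriv q)) :
    l2Form m (pieceDeriv q) (pieceDeriv q) ≤ C * l2Form m q q := by
  refine le_of_sq_le_mul_self (mul_nonneg hC (l2Form_self_nonneg m q)) ?_
  calc l2Form m (pieceDeriv q) (pieceDeriv q) ^ 2
      = l2Form m q (pieceDeriv (pieceDeriv q)) ^ 2 := by
        rw [l2Form_pieceDeriv_eq_neg hm hq hDq, neg_sq]
    _ ≤ l2Form m q q * l2Form m (pieceDeriv (pieceDeriv q)) (pieceDeriv (pieceDeriv q)) :=
        sq_apply_le_of_isPosSemidef (isPosSemidef_l2Form m) _ _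
    _ ≤ l2Form m q q * (C * l2Form m (pieceDeriv q) (pieceDeriv q)) :=
        mul_le_mul_of_nonneg_left h (l2Form_self_nonneg m q)
    _ = C * l2Form m q q * l2Form m (pieceDeriv q) (pieceDeriv q) := by ring

lemma l2Form_pieceDeriv_le_of_mem_neumannSplines (hm : 0 < m) (hp : 1 ≤ p) {q : PiecewisePoly}
    (hq : q ∈ neumannSplines m p) :
    l2Form m (pieceDeriv q) (pieceDeriv q) ≤ 12 * (m : ℝ) ^ 2 * l2Form m q q := by
  obtain ⟨hdegree, hcond⟩ := mem_neumannSplines.1 hq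
  suffices h : ∀ i k, k + 1 + i = p →
      l2Form m (pieceDeriv ((pieceDeriv ^ k) q)) (pieceDeriv ((pieceDeriv ^ k) q)) ≤
        12 * (m : ℝ) ^ 2 * l2Form m ((pieceDeriv ^ k) q) ((pieceDeriv ^ k) q) from
    h (p - 1) 0 (by omega)
  intro i
  induction i with
  | zero =>
    refine fun k hk => l2Form_pieceDeriv_le_of_natDegree_le_one hm fun j => ?_
    have hderiv := natDegree_iterate_derivative (q j) k
    have := hdegree.2 j
    rw [pieceDeriv_pow_apply]
    omega
  | succ i ih =>
    intro k hk
    have hDq := hcond (k + 1) (by omega)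
    have hih := ih (k + 1) (by omega)
    rw [pow_succ', Module.End.mul_apply] at hDq hih
    rw [Function.iterate_succ_apply'] at hDq
    exact l2Form_pieceDeriv_le_of_le hm (by positivity) (hcond k (by omega)) hDq hih

end Splines

/-! ### Splines as functions -/

section SplineFunctions

open Polynomial Filter Topology

variable {m p j k : ℕ} {u : ℝ → ℝ} {q : PiecewisePoly}

lemma knot_le_iff (hm : 0 < m) {x : ℝ} : knot m j ≤ x ↔ (j : ℝ) ≤ m * x := by
  rw [knot, div_le_iff₀ (by positivity), mul_comm]

lemma mem_pieceSet_iff (hj : j < m) (x : ℝ) : x ∈ pieceSet m j ↔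
    (j = 0 ∨ knot m j ≤ x) ∧ (j + 1 = m ∨ x ≤ knot m (j + 1)) := by
  have hlast : j + 1 = m → ((m : ℝ) - 1) / m = knot m j := by
    rintro rfl
    simp [knot]
  have hm1 : j = m - 1 ↔ j + 1 = m := by omega
  simp only [pieceSet, knot_succ, hm1]
  by_cases h0 : j = 0 <;> by_cases h1 : j + 1 = m
  · subst h0
    obtain rfl : m = 1 := by omega
    simpa using le_or_gt x 1 |>.imp_right (zero_le_one.trans ·.le)
  · simp [h0, show 1 ≠ m by omega]
  · simp only [h0, h1, hlast h1, if_false, if_true, mem_union, mem_Icc, mem_Ici, false_or,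
      true_or, and_true]
    rw [← knot]
    tauto
  · simp [h0, h1, knot]

/-- The index of the interval containing `x`: the first and the last interval are extended to
`-∞` and `+∞`, and an interior knot is assigned to the interval on its right. -/
def pieceIndex (m : ℕ) (x : ℝ) : ℕ := min ⌊(m : ℝ) * x⌋₊ (m - 1)

lemma pieceIndex_lt (hm : 0 < m) (x : ℝ) : pieceIndex m x < m := by
  rw [pieceIndex]; omega

lemma pieceIndex_eq_iff (hj : j < m) (x : ℝ) : pieceIndex m x = j ↔
    (j = 0 ∨ knot m j ≤ x) ∧ (j + 1 = m ∨ x < knot m (j + 1)) := by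
  have hm : 0 < m := by omega
  have hle : (j = 0 ∨ knot m j ≤ x) ↔ j ≤ ⌊(m : ℝ) * x⌋₊ := by
    rw [knot_le_iff hm]
    by_cases h : j = 0
    · simp [h]
    · simp only [h, false_or, Nat.le_floor_iff' h]
  have hlt : x < knot m (j + 1) ↔ ⌊(m : ℝ) * x⌋₊ < j + 1 := by
    rw [← not_le, knot_le_iff hm, not_le, Nat.floor_lt' (by omega)]
  rw [hle, hlt, pieceIndex]
  omega

lemma pieceIndex_eq_of_mem_Ioo (hj : j < m) {x : ℝ} (hx : x ∈ Ioo (knot m j) (knot m (j + 1))) :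
    pieceIndex m x = j :=
  (pieceIndex_eq_iff hj x).2 ⟨.inr hx.1.le, .inr hx.2⟩

lemma eventually_lt_knot_pieceIndex_succ (hm : 0 < m) (x : ℝ) :
    ∀ᶠ y in 𝓝 x, pieceIndex m x + 1 = m ∨ y < knot m (pieceIndex m x + 1) := by
  rcases ((pieceIndex_eq_iff (pieceIndex_lt hm x) x).1 rfl).2 with hlast | hlt
  · exact .of_forall fun _ => .inl hlast
  · filter_upwards [Iio_mem_nhds hlt] with y hy using .inr hy

lemma eventually_nhdsGE_pieceIndex_eq (hm : 0 < m) (x : ℝ) :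
    ∀ᶠ y in 𝓝[≥] x, pieceIndex m y = pieceIndex m x := by
  filter_upwards [nhdsWithin_le_nhds (eventually_lt_knot_pieceIndex_succ hm x),
    self_mem_nhdsWithin] with y hlt hy
  have hx := (pieceIndex_eq_iff (pieceIndex_lt hm x) x).1 rfl
  exact (pieceIndex_eq_iff (pieceIndex_lt hm x) y).2 ⟨hx.1.imp_right (·.trans hy), hlt⟩

lemma eventually_pieceIndex_eq (hm : 0 < m) {x : ℝ}
    (hx : pieceIndex m x = 0 ∨ knot m (pieceIndex m x) < x) :
    ∀ᶠ y in 𝓝 x, pieceIndex m y = pieceIndex m x := by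
  have hge : ∀ᶠ y in 𝓝 x, pieceIndex m x = 0 ∨ knot m (pieceIndex m x) ≤ y := by
    rcases hx with h0 | hlt
    · exact .of_forall fun _ => .inl h0
    · filter_upwards [Ioi_mem_nhds hlt] with y hy using .inr hy.le
  filter_upwards [hge, eventually_lt_knot_pieceIndex_succ hm x] with y hge hlt
  exact (pieceIndex_eq_iff (pieceIndex_lt hm x) y).2 ⟨hge, hlt⟩

/-- The function on the real line defined by a piecewise polynomial on `m` intervals; the first and
the last piece are extended beyond `[0, 1]`. -/
def piecewiseEval (m : ℕ) : PiecewisePoly →ₗ[ℝ] ℝ → ℝ :=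
  LinearMap.pi fun x => leval x ∘ₗ LinearMap.proj (pieceIndex m x)

lemma piecewiseEval_apply (m : ℕ) (q : PiecewisePoly) (x : ℝ) :
    piecewiseEval m q x = (q (pieceIndex m x)).eval x := rfl

lemma piecewiseEval_mul (m : ℕ) (q r : PiecewisePoly) (x : ℝ) :
    piecewiseEval m (fun j => q j * r j) x = piecewiseEval m q x * piecewiseEval m r x := by
  simp [piecewiseEval_apply]

lemma piecewiseEval_eqOn (hq : q ∈ continuousPieces m) (hj : j < m) :
    EqOn (piecewiseEval m q) (fun x => (q j).eval x) (pieceSet m j) := by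
  intro x hx
  obtain ⟨hge, hle⟩ := (mem_pieceSet_iff hj x).1 hx
  by_cases hlt : j + 1 = m ∨ x < knot m (j + 1)
  · rw [piecewiseEval_apply, (pieceIndex_eq_iff hj x).2 ⟨hge, hlt⟩]
  · obtain ⟨hlast, hx⟩ := not_or.1 hlt
    obtain rfl : x = knot m (j + 1) := (hle.resolve_left hlast).antisymm (not_lt.1 hx)
    have hindex : pieceIndex m (knot m (j + 1)) = j + 1 :=
      (pieceIndex_eq_iff (by omega) _).2
        ⟨.inr le_rfl, .inr (knot_lt_knot_succ (by omega) _)⟩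
    rw [piecewiseEval_apply, hindex]
    exact (hq j (by omega)).symm

lemma exists_eventually_nhdsLT_pieceIndex_eq (hm : 0 < m) (x : ℝ) : ∃ i,
    (∀ᶠ y in 𝓝[<] x, pieceIndex m y = i) ∧
      ∀ r ∈ continuousPieces m, piecewiseEval m r x = (r i).eval x := by
  have hx := (pieceIndex_eq_iff (pieceIndex_lt hm x) x).1 rfl
  by_cases hint : pieceIndex m x = 0 ∨ knot m (pieceIndex m x) < x
  · exact ⟨_, nhdsWithin_le_nhds (eventually_pieceIndex_eq hm hint), fun r _ => rfl⟩
  · obtain ⟨h0, hle⟩ := not_or.1 hint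
    obtain ⟨i, hi⟩ := Nat.exists_eq_succ_of_ne_zero h0
    have him : i + 1 < m := by simpa [hi] using pieceIndex_lt hm x
    have hxi : x = knot m (i + 1) := by
      rw [hi] at hle hx
      exact (not_lt.1 hle).antisymm (hx.1.resolve_left (by omega))
    refine ⟨i, ?_, fun r hr => ?_⟩
    · filter_upwards [nhdsWithin_le_nhds (Ioi_mem_nhds (hxi ▸ knot_lt_knot_succ hm i)),
        self_mem_nhdsWithin] with y hy hyx
      exact pieceIndex_eq_of_mem_Ioo (by omega) ⟨hy, hxi ▸ hyx⟩
    · rw [piecewiseEval_apply, hi, hxi]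
      exact (hr i him).symm

lemma piecewiseEval_eventuallyEq_nhdsGE (hm : 0 < m) (q : PiecewisePoly) (x : ℝ) :
    piecewiseEval m q =ᶠ[𝓝[≥] x] fun y => (q (pieceIndex m x)).eval y := by
  filter_upwards [eventually_nhdsGE_pieceIndex_eq hm x] with y hy
  rw [piecewiseEval_apply, hy]

lemma exists_piecewiseEval_eventuallyEq_nhdsLE (hm : 0 < m) (x : ℝ) : ∃ i,
    ∀ r ∈ continuousPieces m, piecewiseEval m r x = (r i).eval x ∧
      piecewiseEval m r =ᶠ[𝓝[≤] x] fun y => (r i).eval y := by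
  obtain ⟨i, hleft, hvalue⟩ := exists_eventually_nhdsLT_pieceIndex_eq hm x
  refine ⟨i, fun r hr => ⟨hvalue r hr, ?_⟩⟩
  rw [← Iio_insert, EventuallyEq, nhdsWithin_insert, eventually_sup]
  refine ⟨hvalue r hr, ?_⟩
  filter_upwards [hleft] with y hy
  rw [piecewiseEval_apply, hy]

lemma continuous_piecewiseEval (hm : 0 < m) (hq : q ∈ continuousPieces m) :
    Continuous (piecewiseEval m q) := by
  refine continuous_iff_continuousAt.2 fun x => continuousAt_iff_continuous_left_right.2 ?_
  obtain ⟨i, hi⟩ := exists_piecewiseEval_eventuallyEq_nhdsLE hm x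
  obtain ⟨hvalue, hleft⟩ := hi q hq
  exact ⟨(q i).continuous.continuousWithinAt.congr_of_eventuallyEq hleft hvalue,
    (q _).continuous.continuousWithinAt.congr_of_eventuallyEq
      (piecewiseEval_eventuallyEq_nhdsGE hm q x) rfl⟩

lemma hasDerivAt_piecewiseEval (hm : 0 < m) (hq : q ∈ continuousPieces m)
    (hDq : pieceDeriv q ∈ continuousPieces m) (x : ℝ) :
    HasDerivAt (piecewiseEval m q) (piecewiseEval m (pieceDeriv q) x) x := by
  obtain ⟨i, hi⟩ := exists_piecewiseEval_eventuallyEq_nhdsLE hm x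
  have hright : HasDerivWithinAt (piecewiseEval m q) (piecewiseEval m (pieceDeriv q) x) (Ici x) x :=
    ((q _).hasDerivAt x).hasDerivWithinAt.congr_of_eventuallyEq
      (piecewiseEval_eventuallyEq_nhdsGE hm q x) rfl
  have hleft : HasDerivWithinAt (piecewiseEval m q) (piecewiseEval m (pieceDeriv q) x) (Iic x) x :=
    (hi _ hDq).1 ▸ ((q i).hasDerivAt x).hasDerivWithinAt.congr_of_eventuallyEq
      (hi q hq).2 (hi q hq).1
  simpa only [Iic_union_Ici, hasDerivWithinAt_univ] using hleft.union hright

lemma hasDerivAt_piecewiseEval_of_ne_knot (hm : 0 < m) (q : PiecewisePoly) {x : ℝ}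
    (hx : ∀ j < m, x ≠ knot m j) :
    HasDerivAt (piecewiseEval m q) (piecewiseEval m (pieceDeriv q) x) x := by
  have hindex := (pieceIndex_eq_iff (pieceIndex_lt hm x) x).1 rfl
  have hlocal : piecewiseEval m q =ᶠ[𝓝 x] fun y => (q (pieceIndex m x)).eval y := by
    filter_upwards [eventually_pieceIndex_eq hm (hindex.1.imp_right
      (lt_of_le_of_ne · (hx _ (pieceIndex_lt hm x)).symm))] with y hy
    rw [piecewiseEval_apply, hy]
  exact hlocal.hasDerivAt_iff.2 ((q _).hasDerivAt x)

lemma contDiff_piecewiseEval (hm : 0 < m)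
    (hq : ∀ i ≤ k, (pieceDeriv ^ i) q ∈ continuousPieces m) : ContDiff ℝ k (piecewiseEval m q) := by
  induction k generalizing q with
  | zero => exact contDiff_zero.2 (continuous_piecewiseEval hm (hq 0 le_rfl))
  | succ k ih =>
    have hderiv := hasDerivAt_piecewiseEval (q := q) hm (hq 0 (by omega)) (hq 1 (by omega))
    rw [Nat.cast_succ, contDiff_succ_iff_deriv]
    refine ⟨fun x => (hderiv x).differentiableAt, by simp, ?_⟩
    rw [funext fun x => (hderiv x).deriv]
    refine ih fun i hi => ?_
    simpa only [pow_succ, Module.End.mul_apply] using hq (i + 1) (by omega)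

lemma isSpline_piecewiseEval (hm : 0 < m) (hp : 1 ≤ p) (hq : q ∈ splines m p) :
    IsSpline m p (piecewiseEval m q) := by
  obtain ⟨⟨-, hdegree⟩, hcont⟩ := mem_splines.1 hq
  exact ⟨(contDiff_piecewiseEval hm fun i hi => hcont i (by omega)).contDiffOn, fun j hj =>
    ⟨q j, hdegree j, piecewiseEval_eqOn (hcont 0 hp) hj⟩⟩

lemma knot_two_mul (n i : ℕ) : knot (2 * n) (2 * i) = knot n i := by
  simp [knot, mul_div_mul_left]

lemma monotone_knot (m : ℕ) : Monotone (knot m) := monotone_nat_of_le_succ (knot_le_knot_succ m)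

lemma pieceSet_half_subset {n i : ℕ} (hi : i < n) :
    pieceSet n i ⊆ pieceSet (2 * n) (2 * i) ∪ pieceSet (2 * n) (2 * i + 1) := by
  intro x hx
  rw [mem_pieceSet_iff hi] at hx
  rw [mem_union, mem_pieceSet_iff (by omega), mem_pieceSet_iff (by omega),
    show 2 * i + 1 + 1 = 2 * (i + 1) by ring, knot_two_mul, knot_two_mul]
  rcases le_total x (knot (2 * n) (2 * i + 1)) with hle | hge
  · exact .inl ⟨hx.1.imp_left (by omega), .inr hle⟩
  · exact .inr ⟨.inr hge, hx.2.imp_left (by omega)⟩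

lemma pieceSet_subset_half {n : ℕ} (hj : j < 2 * n) : pieceSet (2 * n) j ⊆ pieceSet n (j / 2) := by
  intro x hx
  rw [mem_pieceSet_iff hj] at hx
  rw [mem_pieceSet_iff (by omega)]
  have hleft : knot n (j / 2) ≤ knot (2 * n) j :=
    knot_two_mul n (j / 2) ▸ monotone_knot _ (by omega)
  have hright : knot (2 * n) (j + 1) ≤ knot n (j / 2 + 1) :=
    knot_two_mul n (j / 2 + 1) ▸ monotone_knot _ (by omega)
  exact ⟨hx.1.imp (by omega) hleft.trans, hx.2.imp (by omega) (·.trans hright)⟩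

lemma isSpline_half_piecewiseEval (hm : 2 ∣ m) (hm0 : 0 < m) (hp : 1 ≤ p) (hq : q ∈ splines m p)
    (hcoarse : q ∈ coarsePieces) : IsSpline (m / 2) p (piecewiseEval m q) := by
  obtain ⟨n, rfl⟩ := hm
  rw [Nat.mul_div_cancel_left n two_pos]
  obtain ⟨⟨-, hdegree⟩, hcont⟩ := mem_splines.1 hq
  refine ⟨(isSpline_piecewiseEval hm0 hp hq).1, fun i hi => ⟨q (2 * i), hdegree _, fun x hx => ?_⟩⟩
  rcases pieceSet_half_subset hi hx with hx | hx
  · exact piecewiseEval_eqOn (hcont 0 hp) (by omega) hx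
  · rw [← hcoarse i]
    exact piecewiseEval_eqOn (hcont 0 hp) (by omega) hx

lemma isSpline_of_isSpline_half (hm : 2 ∣ m) (hu : IsSpline (m / 2) p u) : IsSpline m p u := by
  obtain ⟨n, rfl⟩ := hm
  rw [Nat.mul_div_cancel_left n two_pos] at hu
  refine ⟨hu.1, fun j hj => ?_⟩
  obtain ⟨q, hdegree, hq⟩ := hu.2 (j / 2) (by omega)
  exact ⟨q, hdegree, fun x hx => hq x (pieceSet_subset_half hj hx)⟩

lemma iteratedDeriv_eval (k : ℕ) (r : ℝ[X]) :
    iteratedDeriv k (fun x => r.eval x) = fun x => (derivative^[k] r).eval x := by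
  induction k generalizing r with
  | zero => simp
  | succ k ih =>
    have hderiv : deriv (fun x => r.eval x) = fun x => (derivative r).eval x :=
      funext fun _ => r.deriv
    rw [iteratedDeriv_succ', hderiv, ih, Function.iterate_succ_apply]

lemma eval_iterate_derivative_eq_iteratedDerivWithin {s : Set ℝ} (hs : IsOpen s) {n : ℕ}
    (hu : ContDiffOn ℝ n u s) {x : ℝ} (hx : x ∈ s) (hk : k ≤ n) {r : ℝ[X]} {l : Filter ℝ} [l.NeBot]
    (hl : l ≤ 𝓝 x) (hr : ∀ᶠ y in l, u =ᶠ[𝓝 y] fun z => r.eval z) :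
    (derivative^[k] r).eval x = iteratedDerivWithin k u s x := by
  have hcont : ContinuousAt (iteratedDerivWithin k u s) x :=
    (hu.continuousOn_iteratedDerivWithin (by exact_mod_cast hk)
      hs.uniqueDiffOn).continuousAt (hs.mem_nhds hx)
  refine tendsto_nhds_unique (((derivative^[k] r).continuous.tendsto x).mono_left hl)
    ((hcont.tendsto.mono_left hl).congr' ?_)
  filter_upwards [hr, hl (hs.mem_nhds hx)] with y hy hys
  rw [iteratedDerivWithin_of_isOpen hs hys, hy.iteratedDeriv_eq, iteratedDeriv_eval]

lemma pieceDeriv_pow_mem_continuousPieces (hm : 0 < m)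
    (hu : ContDiffOn ℝ (p - 1 : ℕ) u (Ioo 0 1)) (hk : k < p)
    (hq : ∀ j < m, ∀ x ∈ pieceSet m j, u x = (q j).eval x) :
    (pieceDeriv ^ k) q ∈ continuousPieces m := by
  intro j hj
  have hx : knot m (j + 1) ∈ Ioo (0 : ℝ) 1 := by
    have hm0 : (0 : ℝ) < m := by exact_mod_cast hm
    refine ⟨by rw [knot]; positivity, ?_⟩
    rw [knot, div_lt_one hm0]
    exact_mod_cast hj
  have hlocal : ∀ i < m, ∀ y ∈ Ioo (knot m i) (knot m (i + 1)),
      u =ᶠ[𝓝 y] fun z => (q i).eval z := by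
    intro i hi y hy
    filter_upwards [isOpen_Ioo.mem_nhds hy] with z hz
    exact hq i hi z ((mem_pieceSet_iff hi z).2 ⟨.inr hz.1.le, .inr hz.2.le⟩)
  rw [pieceDeriv_pow_apply, pieceDeriv_pow_apply,
    eval_iterate_derivative_eq_iteratedDerivWithin isOpen_Ioo hu hx (Nat.le_sub_one_of_lt hk)
      (nhdsWithin_le_nhds (s := Iio (knot m (j + 1)))),
    eval_iterate_derivative_eq_iteratedDerivWithin isOpen_Ioo hu hx (Nat.le_sub_one_of_lt hk)
      (nhdsWithin_le_nhds (s := Ioi (knot m (j + 1))))]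
  · filter_upwards [Ioo_mem_nhdsGT (knot_lt_knot_succ hm (j + 1))] with y hy
    exact hlocal (j + 1) hj y hy
  · filter_upwards [Ioo_mem_nhdsLT (knot_lt_knot_succ hm j)] with y hy
    exact hlocal j (by omega) y hy

lemma isSpline_iff_exists (hm : 0 < m) (hp : 1 ≤ p) :
    IsSpline m p u ↔ ∃ q ∈ splines m p, piecewiseEval m q = u := by
  refine ⟨fun hu => ?_, fun ⟨q, hq, hqu⟩ => hqu ▸ isSpline_piecewiseEval hm hp hq⟩
  choose! q hdegree hq using hu.2
  have htrunc : ∀ j < m, ∀ x ∈ pieceSet m j, u x = (if j < m then q j else 0).eval x :=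
    fun j hj x hx => by rw [if_pos hj, hq j hj x hx]
  refine ⟨fun j => if j < m then q j else 0, mem_splines.2 ⟨⟨fun j hj => if_neg hj.not_gt,
    fun j => ?_⟩, fun k hk => pieceDeriv_pow_mem_continuousPieces hm hu.1 hk htrunc⟩, ?_⟩
  · dsimp only
    split_ifs with hj
    exacts [hdegree j hj, by simp]
  · ext x
    have hj := pieceIndex_lt hm x
    have hindex := (pieceIndex_eq_iff hj x).1 rfl
    exact (htrunc _ hj x ((mem_pieceSet_iff hj x).2 (hindex.imp_right (.imp_right le_of_lt)))).symm

lemma iteratedDeriv_piecewiseEval_zero (hm : 0 < m) (k : ℕ) (q : PiecewisePoly) :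
    iteratedDeriv k (piecewiseEval m q) 0 = evalZero ((pieceDeriv ^ k) q) := by
  have hindex : pieceIndex m 0 = 0 := by simp [pieceIndex]
  have hlocal : piecewiseEval m q =ᶠ[𝓝 0] fun x => (q 0).eval x := by
    filter_upwards [eventually_pieceIndex_eq hm (.inl hindex)] with y hy
    rw [piecewiseEval_apply, hy, hindex]
  rw [hlocal.iteratedDeriv_eq, iteratedDeriv_eval, evalZero_apply, pieceDeriv_pow_apply]

lemma iteratedDeriv_piecewiseEval_one (hm : 0 < m) (k : ℕ) (q : PiecewisePoly) :
    iteratedDeriv k (piecewiseEval m q) 1 = evalOne m ((pieceDeriv ^ k) q) := by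
  have hindex : pieceIndex m 1 = m - 1 := by simp [pieceIndex]
  have hlt : knot m (m - 1) < 1 := by
    simpa [Nat.sub_add_cancel hm, knot_self hm] using knot_lt_knot_succ hm (m - 1)
  have hlocal : piecewiseEval m q =ᶠ[𝓝 1] fun x => (q (m - 1)).eval x := by
    filter_upwards [eventually_pieceIndex_eq hm (.inr (hindex.symm ▸ hlt))] with y hy
    rw [piecewiseEval_apply, hy, hindex]
  rw [hlocal.iteratedDeriv_eq, iteratedDeriv_eval, evalOne_apply, pieceDeriv_pow_apply]

lemma mem_neumannSplines_iff : q ∈ neumannSplines m p ↔ q ∈ splines m p ∧ ∀ l, 2 * l + 1 < p →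
    evalZero ((pieceDeriv ^ (2 * l + 1)) q) = 0 ∧
      evalOne m ((pieceDeriv ^ (2 * l + 1)) q) = 0 := by
  have hodd (l : ℕ) : not^[2 * l + 1] true = false :=
    congrFun (Bool.involutive_not.iterate_odd (odd_two_mul_add_one l)) true
  refine ⟨fun hq => ⟨neumannSplines_le_splines hq, fun l hl => ?_⟩, fun ⟨hq, hends⟩ =>
    mem_neumannSplines.2 ⟨hq.1, fun k hk => ?_⟩⟩
  · have hcond := ((mem_neumannSplines.1 hq).2 _ hl).2
    rw [hodd] at hcond
    exact hcond
  · refine ⟨⟨fun j hj => ?_, (mem_splines.1 hq).2 k hk⟩, ?_⟩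
    · rw [pieceDeriv_pow_apply, hq.1.1 j hj, iterate_derivative_zero]
    · rcases k.even_or_odd with heven | ⟨l, rfl⟩
      · rw [Bool.involutive_not.iterate_even heven]
        exact Submodule.mem_top
      · rw [hodd]
        exact hends l hk

lemma isSpline0_iff_exists (hm : 0 < m) (hp : 1 ≤ p) :
    IsSpline0 m p u ↔ ∃ q ∈ neumannSplines m p, piecewiseEval m q = u := by
  simp only [IsSpline0, isSpline_iff_exists hm hp, mem_neumannSplines_iff]
  constructor
  · rintro ⟨⟨q, hq, rfl⟩, hends⟩
    simp only [iteratedDeriv_piecewiseEval_zero hm, iteratedDeriv_piecewiseEval_one hm] at hends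
    exact ⟨q, ⟨hq, hends⟩, rfl⟩
  · rintro ⟨q, ⟨hq, hends⟩, rfl⟩
    simp only [iteratedDeriv_piecewiseEval_zero hm, iteratedDeriv_piecewiseEval_one hm]
    exact ⟨⟨q, hq, rfl⟩, hends⟩

lemma eval_eqOn_piecewiseEval (q : PiecewisePoly) (hj : j < m) :
    EqOn (fun x => (q j).eval x) (piecewiseEval m q) (uIoo (knot m j) (knot m (j + 1))) := by
  intro x hx
  rw [uIoo_of_le (knot_le_knot_succ m j)] at hx
  rw [piecewiseEval_apply, pieceIndex_eq_of_mem_Ioo hj hx]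

lemma intervalIntegrable_piecewiseEval (q : PiecewisePoly) (hj : j < m) :
    IntervalIntegrable (piecewiseEval m q) volume (knot m j) (knot m (j + 1)) :=
  (intervalIntegrable_eval (q j) _ _).congr_uIoo (eval_eqOn_piecewiseEval q hj)

lemma integrableOn_piecewiseEval (hm : 0 < m) (q : PiecewisePoly) :
    IntegrableOn (piecewiseEval m q) (Ioo 0 1) := by
  have h := IntervalIntegrable.trans_iterate (a := knot m)
    fun _ hj => intervalIntegrable_piecewiseEval q hj
  rwa [knot_zero, knot_self hm, intervalIntegrable_iff_integrableOn_Ioo_of_le zero_le_one] at h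

lemma integral_piecewiseEval (hm : 0 < m) (q : PiecewisePoly) : ∫ x in Ioo 0 1, piecewiseEval m q x
    = ∑ j ∈ Finset.range m, polyIntegral (knot m j) (knot m (j + 1)) (q j) := by
  have h := intervalIntegral.sum_integral_adjacent_intervals (a := knot m)
    fun _ hj => intervalIntegrable_piecewiseEval q hj
  rw [knot_zero, knot_self hm] at h
  rw [← integral_Ioc_eq_integral_Ioo, ← intervalIntegral.integral_of_le zero_le_one, ← h]
  refine Finset.sum_congr rfl fun j hj => ?_
  exact (intervalIntegral.integral_congr_uIoo
    (eval_eqOn_piecewiseEval q (Finset.mem_range.1 hj))).symm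

lemma integral_piecewiseEval_mul (hm : 0 < m) (q r : PiecewisePoly) :
    ∫ x in Ioo 0 1, piecewiseEval m q x * piecewiseEval m r x = l2Form m q r := by
  simp only [← piecewiseEval_mul, integral_piecewiseEval hm, l2Form_apply, polyForm_apply]

lemma isSpline1_iff_exists (hm : 0 < m) (hp : 1 ≤ p) : IsSpline1 m p u ↔
    ∃ q ∈ splines m p, (∀ r ∈ neumannSplines m p, l2Form m q r = 0) ∧ piecewiseEval m q = u := by
  simp only [IsSpline1, isSpline_iff_exists hm hp, isSpline0_iff_exists hm hp]
  constructor
  · rintro ⟨⟨q, hq, rfl⟩, horth⟩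
    refine ⟨q, hq, fun r hr => ?_, rfl⟩
    rw [← integral_piecewiseEval_mul hm]
    exact horth _ ⟨r, hr, rfl⟩
  · rintro ⟨q, hq, horth, rfl⟩
    refine ⟨⟨q, hq, rfl⟩, ?_⟩
    rintro _ ⟨r, hr, rfl⟩
    exact (integral_piecewiseEval_mul hm q r).trans (horth r hr)

end SplineFunctions

/-! ### Coordinates on the univariate spline space -/

section Coordinates

lemma exists_linear_proj {V : Type*} [AddCommGroup V] [Module ℝ V] (B : BilinForm ℝ V)
    (U : Submodule ℝ V) [FiniteDimensional ℝ U] (hdef : ∀ x ∈ U, B x x = 0 → x = 0) :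
    ∃ P : Module.End ℝ V, (∀ x, P x ∈ U) ∧ ∀ x, ∀ z ∈ U, B (x - P x) z = 0 := by
  let b := Module.Basis.ofVectorSpace ℝ V
  choose s hs hBs using fun i => exists_mem_forall_bilinForm_sub_eq_zero B U hdef (b i)
  have hrange : LinearMap.range (b.constr ℝ s) ≤ U := by
    rw [b.constr_range ℝ, Submodule.span_le]
    rintro _ ⟨i, rfl⟩
    exact hs i
  refine ⟨b.constr ℝ s, fun x => hrange ⟨x, rfl⟩, fun x z hz => ?_⟩
  have hzero : B.flip z ∘ₗ (LinearMap.id - b.constr ℝ s) = 0 :=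
    b.ext fun i => by simpa using hBs i z hz
  exact LinearMap.congr_fun hzero x

open scoped MatrixOrder Matrix in
lemma exists_transpose_mul_self_eq {κ : Type*} [Fintype κ] {K : Matrix κ κ ℝ}
    (hK : K.PosSemidef) : ∃ R : Matrix κ κ ℝ, Rᵀ * R = K := by
  classical
  obtain ⟨R, hR⟩ := CStarAlgebra.nonneg_iff_eq_star_mul_self.mp hK.nonneg
  exact ⟨R, by rw [hR, Matrix.star_eq_conjTranspose, Matrix.conjTranspose_eq_transpose_of_trivial]⟩

lemma l2Form_add_self_le (m : ℕ) (q r : PiecewisePoly) :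
    l2Form m (q + r) (q + r) ≤ 2 * l2Form m q q + 2 * l2Form m r r := by
  have hnonneg := l2Form_self_nonneg m (q - r)
  simp only [map_add, map_sub, LinearMap.add_apply, LinearMap.sub_apply] at hnonneg ⊢
  linarith

variable {m p : ℕ}

section Projection

variable {U : Submodule ℝ PiecewisePoly} {x g : PiecewisePoly}

lemma l2Form_proj_le (hg : g ∈ U) (horth : ∀ z ∈ U, l2Form m (x - g) z = 0) :
    l2Form m g g ≤ l2Form m x x := by
  linarith [apply_self_eq_add_of_apply_sub_eq_zero (isPosSemidef_l2Form m).isSymm (horth g hg),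
    l2Form_self_nonneg m (x - g)]

/-- The projection `g` and the approximation `s` of `x` differ by an element of the space where
the inverse inequality holds, which makes the `L²` projection stable in `H¹`. -/
lemma proj_approx_and_stable (hm : 2 ∣ m) (hm0 : 0 < m) (hp : 1 ≤ p)
    (hU : coarseSplines m p true ≤ U) (hU' : U ≤ neumannSplines m p) (hx : x ∈ splines m p)
    (hg : g ∈ U) (horth : ∀ z ∈ U, l2Form m (x - g) z = 0) :
    l2Form m (x - g) (x - g) ≤ 3 / (m : ℝ) ^ 2 * l2Form m (pieceDeriv x) (pieceDeriv x) ∧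
      l2Form m (pieceDeriv g) (pieceDeriv g) ≤ 74 * l2Form m (pieceDeriv x) (pieceDeriv x) := by
  obtain ⟨s, hs, hxs, hDs⟩ : ∃ s ∈ coarseSplines m p true,
      l2Form m (x - s) (x - s) ≤ 3 / (m : ℝ) ^ 2 * l2Form m (pieceDeriv x) (pieceDeriv x) ∧
      l2Form m (pieceDeriv s) (pieceDeriv s) ≤ l2Form m (pieceDeriv x) (pieceDeriv x) := by
    obtain ⟨p, rfl⟩ := Nat.exists_eq_add_of_le' hp
    exact exists_mem_coarseSplines_succ_approx hm hm0 (by positivity)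
      (fun φ hφ => exists_mem_coarseSplines_approx hm hm0 hφ) (splines_le_h1Pieces hp hx)
  have hgs : g - s ∈ U := sub_mem hg (hU hs)
  have hpyth : l2Form m (x - s) (x - s) =
      l2Form m (x - g) (x - g) + l2Form m (g - s) (g - s) := by
    have h := apply_self_eq_add_of_apply_sub_eq_zero (isPosSemidef_l2Form m).isSymm
      (x := x - s) (y := g - s) (by rw [sub_sub_sub_cancel_right]; exact horth _ hgs)
    rwa [sub_sub_sub_cancel_right] at h
  have hgs_le : l2Form m (g - s) (g - s) ≤
      3 / (m : ℝ) ^ 2 * l2Form m (pieceDeriv x) (pieceDeriv x) := by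
    linarith [l2Form_self_nonneg m (x - g)]
  have hDgs : l2Form m (pieceDeriv (g - s)) (pieceDeriv (g - s)) ≤
      36 * l2Form m (pieceDeriv x) (pieceDeriv x) := by
    calc _ ≤ 12 * (m : ℝ) ^ 2 * l2Form m (g - s) (g - s) :=
          l2Form_pieceDeriv_le_of_mem_neumannSplines hm0 hp (hU' hgs)
      _ ≤ 12 * (m : ℝ) ^ 2 * (3 / (m : ℝ) ^ 2 * l2Form m (pieceDeriv x) (pieceDeriv x)) := by gcongr
      _ = _ := by field_simp; ring
  have hDg := l2Form_add_self_le m (pieceDeriv (g - s)) (pieceDeriv s)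
  rw [← map_add, sub_add_cancel] at hDg
  exact ⟨by linarith [l2Form_self_nonneg m (g - s)], by linarith⟩

end Projection

/-- The `H¹` seminorm form on the spline space. -/
def stiffness (m p : ℕ) : BilinForm ℝ (splines m p) :=
  (l2Form m).compl₁₂ (pieceDeriv ∘ₗ (splines m p).subtype) (pieceDeriv ∘ₗ (splines m p).subtype)

lemma stiffness_apply (q r : splines m p) :
    stiffness m p q r = l2Form m (pieceDeriv q) (pieceDeriv r) := rfl

lemma isPosSemidef_stiffness (m p : ℕ) : (stiffness m p).IsPosSemidef where
  eq _ _ := (isPosSemidef_l2Form m).eq _ _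
  nonneg _ := l2Form_self_nonneg m _

/-- An `L²`-orthonormal basis of the spline space adapted to the splitting `S = S₀ ⊕ S₁` (labels
`false ↦ S₀`, `true ↦ S₁`), a factor `grad` of the stiffness matrix, and the `L²` projector onto the
coarse splines whose odd derivatives vanish at the endpoints. -/
structure SplineCoordinates (m p : ℕ) where
  size : ℕ
  basis : Module.Basis (Fin size) ℝ (splines m p)
  label : Fin size → Bool
  grad : Matrix (Fin size) (Fin size) ℝ
  coarseProj : Module.End ℝ (splines m p)
  orthonormal : ∀ i k, l2Form m (basis i) (basis k) = if i = k then 1 else 0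
  basis_mem : ∀ i, label i = false → (basis i : PiecewisePoly) ∈ neumannSplines m p
  basis_orthogonal : ∀ i, label i = true → ∀ q ∈ neumannSplines m p, l2Form m (basis i) q = 0
  transpose_grad_mul_grad :
    grad.transpose * grad = LinearMap.BilinForm.toMatrix basis (stiffness m p)
  coarseProj_mem : ∀ q : splines m p, (coarseProj q : PiecewisePoly) ∈ coarseSplines m p true
  coarseProj_orthogonal : ∀ q : splines m p, ∀ z ∈ coarseSplines m p true,
    l2Form m ((q : PiecewisePoly) - coarseProj q) z = 0

lemma nonempty_splineCoordinates (m p : ℕ) : Nonempty (SplineCoordinates m p) := by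
  obtain ⟨n, b, t, horthonormal, hfalse, htrue⟩ :=
    exists_basis_adapted (B := (l2Form m).restrict (splines m p))
      { eq := fun _ _ => (isPosSemidef_l2Form m).eq _ _, nonneg := fun _ => l2Form_self_nonneg m _ }
      (fun x hx => Subtype.ext
        (eq_zero_of_l2Form_self_eq_zero (splines_le_boundedDegree x.2).1 hx))
      ((neumannSplines m p).comap (splines m p).subtype)
  obtain ⟨R, hR⟩ := exists_transpose_mul_self_eq <|
    (LinearMap.isPosSemidef_iff_posSemidef_toMatrix b).1
      (LinearMap.BilinForm.isPosSemidef_iff.1 (isPosSemidef_stiffness m p))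
  obtain ⟨P, hP, hPorth⟩ := exists_linear_proj (l2Form m) (coarseSplines m p true)
    fun x hx => eq_zero_of_l2Form_self_eq_zero (coarseSplines_le_vanishFrom hx)
  have hPmem : ∀ q ∈ splines m p, P q ∈ splines m p := fun q _ =>
    neumannSplines_le_splines (coarseSplines_le_neumannSplines (hP q))
  exact ⟨⟨n, b, t, R, P.restrict hPmem, horthonormal, hfalse,
    fun i hi q hq => htrue i hi ⟨q, neumannSplines_le_splines hq⟩ hq, hR,
    fun q => hP q, fun q => hPorth q⟩⟩

namespace SplineCoordinates

variable (C : SplineCoordinates m p)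

/-- The spline with given coefficients. -/
def combination : (Fin C.size → ℝ) ≃ₗ[ℝ] splines m p := C.basis.equivFun.symm

lemma combination_apply (x : Fin C.size → ℝ) :
    (C.combination x : PiecewisePoly) = ∑ i, x i • (C.basis i : PiecewisePoly) := by
  simp [combination, Module.Basis.equivFun_symm_apply]

lemma l2Form_basis_combination (i : Fin C.size) (x : Fin C.size → ℝ) :
    l2Form m (C.basis i) (C.combination x) = x i := by
  simp [combination_apply, C.orthonormal]

lemma sqNorm_eq_l2Form (x : Fin C.size → ℝ) :
    sqNorm x = l2Form m (C.combination x) (C.combination x) := by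
  conv_rhs => fun; rw [C.combination_apply, map_sum]
  simp [C.l2Form_basis_combination, sqNorm, dotProduct]

lemma sqNorm_grad_eq_l2Form (x : Fin C.size → ℝ) : sqNorm (C.grad.mulVec x) =
    l2Form m (pieceDeriv (C.combination x)) (pieceDeriv (C.combination x)) := by
  rw [← stiffness_apply, combination, ← LinearMap.BilinForm.dotProduct_toMatrix_mulVec,
    ← C.transpose_grad_mul_grad, ← Matrix.mulVec_mulVec, Matrix.dotProduct_mulVec,
    Matrix.vecMul_transpose, sqNorm]

lemma combination_labelProj (b : Bool) (x : Fin C.size → ℝ) :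
    (C.combination ((labelProj C.label b).mulVec x) : PiecewisePoly) =
      ∑ i, if C.label i = b then x i • (C.basis i : PiecewisePoly) else 0 := by
  rw [combination_apply]
  refine Finset.sum_congr rfl fun i _ => ?_
  rw [labelProj, Matrix.mulVec_diagonal]
  split_ifs <;> simp

lemma combination_labelProj_false_mem (x : Fin C.size → ℝ) :
    (C.combination ((labelProj C.label false).mulVec x) : PiecewisePoly) ∈ neumannSplines m p := by
  rw [combination_labelProj]
  refine Submodule.sum_mem _ fun i _ => ?_
  split_ifs with h
  · exact Submodule.smul_mem _ _ (C.basis_mem i h)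
  · exact zero_mem _

lemma combination_sub_labelProj_false (x : Fin C.size → ℝ) :
    (C.combination x : PiecewisePoly) - C.combination ((labelProj C.label false).mulVec x) =
      C.combination ((labelProj C.label true).mulVec x) := by
  rw [combination_labelProj, combination_labelProj, combination_apply, ← Finset.sum_sub_distrib]
  exact Finset.sum_congr rfl fun i _ => by cases C.label i <;> simp

lemma l2Form_combination_sub_labelProj_false (x : Fin C.size → ℝ) {q : PiecewisePoly}
    (hq : q ∈ neumannSplines m p) :
    l2Form m (C.combination x - C.combination ((labelProj C.label false).mulVec x)) q = 0 := by
  rw [combination_sub_labelProj_false, combination_labelProj, map_sum, LinearMap.sum_apply]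
  refine Finset.sum_eq_zero fun i _ => ?_
  split_ifs with h
  · rw [map_smul, LinearMap.smul_apply, C.basis_orthogonal i h q hq, smul_zero]
  · simp

/-- The matrix of the coarse projector. -/
def projMatrix : Matrix (Fin C.size) (Fin C.size) ℝ :=
  LinearMap.toMatrix C.basis C.basis C.coarseProj

lemma combination_projMatrix (x : Fin C.size → ℝ) :
    C.combination (C.projMatrix.mulVec x) = C.coarseProj (C.combination x) := by
  rw [combination, LinearEquiv.symm_apply_eq, Module.Basis.equivFun_apply,
    ← LinearMap.toMatrix_mulVec_repr C.basis C.basis, ← Module.Basis.equivFun_apply,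
    LinearEquiv.apply_symm_apply, projMatrix]

/-- The univariate spline space as a model: the inverse inequality and the stability and
approximation properties of the projectors, expressed in coordinates. -/
def model (hm : 2 ∣ m) (hm0 : 0 < m) (hp : 1 ≤ p) : UnivariateModel (Fin C.size) (m : ℝ) where
  label := C.label
  grad := C.grad
  proj := C.projMatrix
  one_le := by exact_mod_cast hm0
  inverse_le x := by
    rw [← Matrix.mulVec_mulVec, sqNorm_grad_eq_l2Form, sqNorm_eq_l2Form]
    refine (l2Form_pieceDeriv_le_of_mem_neumannSplines hm0 hp
      (C.combination_labelProj_false_mem x)).trans ?_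
    gcongr
    exact l2Form_proj_le (C.combination_labelProj_false_mem x)
      fun z hz => C.l2Form_combination_sub_labelProj_false x hz
  stable_le x := by
    have hstable := (proj_approx_and_stable hm hm0 hp coarseSplines_le_neumannSplines le_rfl
      (C.combination x).2 (C.combination_labelProj_false_mem x)
      fun z hz => C.l2Form_combination_sub_labelProj_false x hz).2
    rw [← Matrix.mulVec_mulVec, sqNorm_grad_eq_l2Form, sqNorm_grad_eq_l2Form,
      ← combination_sub_labelProj_false, sub_eq_add_neg, map_add]
    refine (l2Form_add_self_le m _ _).trans ?_
    simp only [map_neg, LinearMap.neg_apply, neg_neg]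
    linarith
  proj_le x := by
    rw [sqNorm_eq_l2Form, sqNorm_eq_l2Form, combination_projMatrix]
    exact l2Form_proj_le (C.coarseProj_mem _) (C.coarseProj_orthogonal _)
  approx_le x := by
    rw [sqNorm_eq_l2Form, sqNorm_grad_eq_l2Form, Matrix.sub_mulVec, Matrix.one_mulVec, map_sub,
      combination_projMatrix]
    exact (proj_approx_and_stable hm hm0 hp le_rfl coarseSplines_le_neumannSplines
      (C.combination x).2 (C.coarseProj_mem _) (C.coarseProj_orthogonal _)).1
  grad_proj_le x := by
    rw [← Matrix.mulVec_mulVec, sqNorm_grad_eq_l2Form, sqNorm_grad_eq_l2Form,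
      combination_projMatrix]
    exact (proj_approx_and_stable hm hm0 hp le_rfl coarseSplines_le_neumannSplines
      (C.combination x).2 (C.coarseProj_mem _) (C.coarseProj_orthogonal _)).2

end SplineCoordinates

end Coordinates

/-! ### Tensor-product functions and their coefficient arrays -/

section TensorFunctions

section Gram

variable {ι κ : Type*} [Fintype ι] [DecidableEq ι] [Fintype κ]

lemma dotProduct_modeProd_transpose (j : ι) (T : Matrix κ κ ℝ) (c c' : (ι → κ) → ℝ) :
    c ⬝ᵥ modeProd j T.transpose c' = modeProd j T c ⬝ᵥ c' := by
  simp only [dotProduct, ← (Equiv.funSplitAt j κ).symm.sum_comp, Fintype.sum_prod_type_right,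
    modeProd_apply, update_funSplitAt_symm, Finset.mul_sum, Finset.sum_mul]
  refine Finset.sum_congr rfl fun y _ => ?_
  rw [Finset.sum_comm]
  refine Finset.sum_congr rfl fun i _ => Finset.sum_congr rfl fun k _ => ?_
  simp [Equiv.funSplitAt]
  ring

lemma sum_mul_prod_one [DecidableEq κ] (c : (ι → κ) → ℝ) (I : ι → κ) :
    ∑ J, c J * ∏ k, (1 : Matrix κ κ ℝ) (I k) (J k) = c I := by
  simp [Matrix.one_apply, Finset.prod_ite_zero, ← funext_iff]

lemma sum_mul_prod_update_one [DecidableEq κ] (j : ι) (T : Matrix κ κ ℝ) (c : (ι → κ) → ℝ)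
    (I : ι → κ) :
    ∑ J, c J * ∏ k, Function.update (1 : ι → Matrix κ κ ℝ) j T k (I k) (J k) =
      modeProd j T c I := by
  rw [modeProd_apply]
  symm
  refine Fintype.sum_of_injective _ (Function.update_injective I j) _ _ (fun J hJ => ?_)
    fun i => ?_
  · obtain ⟨k, hk, hne⟩ : ∃ k ≠ j, I k ≠ J k := by
      by_contra! h
      exact hJ ⟨J j, Function.update_eq_iff.2 ⟨rfl, h⟩⟩
    rw [Finset.prod_eq_zero (Finset.mem_univ k), mul_zero]
    simp [hk, hne]
  · rw [mul_comm, Finset.prod_eq_single j (fun k _ hk => by simp [hk]) (by simp)]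
    simp

end Gram

variable {d : ℕ} {κ : Type*} [Fintype κ]

/-- The function `Σ_I c_I φ_{1,I₁} ⊗ ⋯ ⊗ φ_{d,I_d}` with coefficient array `c`. -/
def tensorSum (φ : Fin d → κ → ℝ → ℝ) : ((Fin d → κ) → ℝ) →ₗ[ℝ] (Fin d → ℝ) → ℝ :=
  Fintype.linearCombination ℝ fun I x => ∏ j, φ j (I j) (x j)

lemma tensorSum_apply (φ : Fin d → κ → ℝ → ℝ) (c : (Fin d → κ) → ℝ) (x : Fin d → ℝ) :
    tensorSum φ c x = ∑ I, c I * ∏ j, φ j (I j) (x j) := by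
  simp [tensorSum, Fintype.linearCombination_apply]

lemma tensorSum_rankOne (φ : Fin d → κ → ℝ → ℝ) (y : Fin d → κ → ℝ) :
    tensorSum φ (rankOne y) = fun x => ∏ j, ∑ i, y j i * φ j i (x j) := by
  classical
  ext x
  rw [tensorSum_apply, Finset.prod_univ_sum, Fintype.piFinset_univ]
  exact Finset.sum_congr rfl fun I _ => Finset.prod_mul_distrib.symm

lemma volume_restrict_cube (d : ℕ) : (volume : Measure (Fin d → ℝ)).restrict (cube d) =
    Measure.pi fun _ => (volume : Measure ℝ).restrict (Ioo 0 1) := by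
  rw [cube, volume_pi, Measure.restrict_pi_pi]

section InnerProduct

variable {φ ψ : Fin d → κ → ℝ → ℝ}

lemma tensorSum_mul_tensorSum (φ ψ : Fin d → κ → ℝ → ℝ) (c c' : (Fin d → κ) → ℝ) :
    (fun x => tensorSum φ c x * tensorSum ψ c' x) = fun x => ∑ I, ∑ J, c I * (c' J *
      ∏ j, φ j (I j) (x j) * ψ j (J j) (x j)) := by
  ext x
  simp only [tensorSum_apply, Finset.sum_mul_sum, Finset.prod_mul_distrib]
  exact Finset.sum_congr rfl fun I _ => Finset.sum_congr rfl fun J _ => by ring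

lemma integrableOn_prod_mul_prod {κ : Type*} {φ ψ : Fin d → κ → ℝ → ℝ}
    (hint : ∀ j i k, IntegrableOn (fun t => φ j i t * ψ j k t) (Ioo 0 1)) (I J : Fin d → κ) :
    IntegrableOn (fun x : Fin d → ℝ => ∏ j, φ j (I j) (x j) * ψ j (J j) (x j)) (cube d) := by
  rw [IntegrableOn, volume_restrict_cube]
  exact Integrable.fintype_prod (f := fun j t => φ j (I j) t * ψ j (J j) t) fun j => hint j _ _

lemma integrableOn_tensorSum_mul_tensorSum
    (hint : ∀ j i k, IntegrableOn (fun t => φ j i t * ψ j k t) (Ioo 0 1)) (c c' : (Fin d → κ) → ℝ) :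
    IntegrableOn (fun x => tensorSum φ c x * tensorSum ψ c' x) (cube d) := by
  rw [tensorSum_mul_tensorSum]
  exact integrable_finsetSum _ fun I _ => integrable_finsetSum _ fun J _ =>
    ((integrableOn_prod_mul_prod hint I J).const_mul _).const_mul _

lemma ipd_tensorSum
    (hint : ∀ j i k, IntegrableOn (fun t => φ j i t * ψ j k t) (Ioo 0 1)) (c c' : (Fin d → κ) → ℝ) :
    ipd d (tensorSum φ c) (tensorSum ψ c') =
      ∑ I, c I * ∑ J, c' J * ∏ j, ip0 (φ j (I j)) (ψ j (J j)) := by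
  have hterm (I J : Fin d → κ) := (integrableOn_prod_mul_prod hint I J).const_mul (c' J)
  rw [ipd, tensorSum_mul_tensorSum, integral_finsetSum _ fun I _ =>
    integrable_finsetSum _ fun J _ => (hterm I J).const_mul _]
  refine Finset.sum_congr rfl fun I _ => ?_
  rw [integral_finsetSum _ fun J _ => (hterm I J).const_mul _, Finset.mul_sum]
  refine Finset.sum_congr rfl fun J _ => ?_
  rw [integral_const_mul, integral_const_mul, volume_restrict_cube,
    integral_fintype_prod_eq_prod (f := fun j t => φ j (I j) t * ψ j (J j) t)]
  rfl

end InnerProduct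

lemma pd_tensorSum (φ : Fin d → κ → ℝ → ℝ) (c : (Fin d → κ) → ℝ) {j : Fin d} {φ' : κ → ℝ → ℝ}
    {x : Fin d → ℝ} (hφ : ∀ i, HasDerivAt (φ j i) (φ' i (x j)) (x j)) :
    pd d j (tensorSum φ c) x = tensorSum (Function.update φ j φ') c x := by
  refine HasDerivAt.deriv ?_
  simp only [tensorSum_apply]
  refine HasDerivAt.fun_sum fun I _ => HasDerivAt.const_mul _ ?_
  have hsplit (f : Fin d → ℝ) (hf : ∀ k ≠ j, f k = φ k (I k) (x k)) :
      ∏ k, f k = f j * ∏ k ∈ Finset.univ.erase j, φ k (I k) (x k) := by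
    rw [← Finset.mul_prod_erase _ _ (Finset.mem_univ j)]
    exact congrArg _ (Finset.prod_congr rfl fun k hk => hf k (Finset.ne_of_mem_erase hk))
  rw [hsplit (fun k => Function.update φ j φ' k (I k) (x k)) fun k hk => by simp [hk],
    funext fun t => hsplit (fun k => φ k (I k) (Function.update x j t k)) fun k hk => by simp [hk]]
  simpa using (hφ (I j)).mul_const _

end TensorFunctions

/-! ### The two-grid method for tensor-product splines -/

lemma integrableOn_piecewiseEval_mul {m : ℕ} (hm : 0 < m) (q r : PiecewisePoly) :
    IntegrableOn (fun t => piecewiseEval m q t * piecewiseEval m r t) (Ioo 0 1) := by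
  simp only [← piecewiseEval_mul]
  exact integrableOn_piecewiseEval hm _

lemma tensorSplineCoarse_le_tensorSpline {m p d : ℕ} (hm : 2 ∣ m) :
    TensorSplineCoarse d m p ≤ TensorSpline d m p := by
  rw [TensorSplineCoarse, TensorSpline, Submodule.span_le]
  rintro u ⟨f, hf, rfl⟩
  exact Submodule.subset_span ⟨f, fun i => isSpline_of_isSpline_half hm (hf i), rfl⟩

namespace SplineCoordinates

variable {m p d : ℕ} (C : SplineCoordinates m p)

variable (d) in
/-- The tensor-product spline with given coefficient array. -/
def synth : ((Fin d → Fin C.size) → ℝ) →ₗ[ℝ] (Fin d → ℝ) → ℝ :=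
  tensorSum fun _ i => piecewiseEval m (C.basis i)

/-- The univariate factors of the `j`-th partial derivatives of the tensor-product basis. -/
def partialFactors (j : Fin d) : Fin d → Fin C.size → ℝ → ℝ :=
  Function.update (fun _ i => piecewiseEval m (C.basis i)) j
    fun i => piecewiseEval m (pieceDeriv (C.basis i))

lemma integrableOn_partialFactors_mul (hm : 0 < m) (j k : Fin d) (i l : Fin C.size) :
    IntegrableOn (fun t => C.partialFactors j k i t * C.partialFactors j k l t) (Ioo 0 1) := by
  by_cases h : k = j
  · subst h
    simpa [partialFactors] using integrableOn_piecewiseEval_mul hm _ _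
  · simpa [partialFactors, h] using integrableOn_piecewiseEval_mul hm _ _

lemma ip0_basis (hm : 0 < m) (i k : Fin C.size) :
    ip0 (piecewiseEval m (C.basis i)) (piecewiseEval m (C.basis k)) =
      (1 : Matrix (Fin C.size) (Fin C.size) ℝ) i k := by
  rw [ip0, integral_piecewiseEval_mul hm, C.orthonormal, Matrix.one_apply]

lemma ip0_partialFactors (hm : 0 < m) (j k : Fin d) (i l : Fin C.size) :
    ip0 (C.partialFactors j k i) (C.partialFactors j k l) =
      Function.update (1 : Fin d → Matrix _ _ ℝ) j (C.grad.transpose * C.grad) k i l := by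
  by_cases h : k = j
  · subst h
    simp only [partialFactors, Function.update_self]
    rw [ip0, integral_piecewiseEval_mul hm, C.transpose_grad_mul_grad,
      LinearMap.BilinForm.toMatrix_apply, stiffness_apply]
  · simpa [partialFactors, h] using C.ip0_basis hm i l

lemma ipd_synth (hm : 0 < m) (c c' : (Fin d → Fin C.size) → ℝ) :
    ipd d (C.synth d c) (C.synth d c') = c ⬝ᵥ c' := by
  rw [synth, ipd_tensorSum fun _ _ _ => integrableOn_piecewiseEval_mul hm _ _]
  simp only [C.ip0_basis hm, sum_mul_prod_one, dotProduct]

lemma pd_synth_ae_eq (hm : 0 < m) (j : Fin d) (c : (Fin d → Fin C.size) → ℝ) :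
    pd d j (C.synth d c) =ᵐ[volume.restrict (cube d)] tensorSum (C.partialFactors j) c := by
  have hknot : ∀ᵐ t : ℝ, ∀ i : Fin m, t ≠ knot m i :=
    ae_all_iff.2 fun i => Measure.ae_ne _ _
  have hknot' : ∀ᵐ x : Fin d → ℝ, ∀ i : Fin m, x j ≠ knot m i :=
    (Measure.quasiMeasurePreserving_eval (fun _ : Fin d => (volume : Measure ℝ)) j).ae hknot
  filter_upwards [ae_restrict_of_ae hknot'] with x hx
  exact pd_tensorSum _ c fun i =>
    hasDerivAt_piecewiseEval_of_ne_knot hm _ fun k hk => hx ⟨k, hk⟩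

lemma pd_synth_mul_pd_synth_ae_eq (hm : 0 < m) (j : Fin d) (c c' : (Fin d → Fin C.size) → ℝ) :
    (fun x => pd d j (C.synth d c) x * pd d j (C.synth d c') x) =ᵐ[volume.restrict (cube d)]
      fun x => tensorSum (C.partialFactors j) c x * tensorSum (C.partialFactors j) c' x :=
  (C.pd_synth_ae_eq hm j c).mul (C.pd_synth_ae_eq hm j c')

lemma integrableOn_pd_synth_mul (hm : 0 < m) (j : Fin d) (c c' : (Fin d → Fin C.size) → ℝ) :
    IntegrableOn (fun x => pd d j (C.synth d c) x * pd d j (C.synth d c') x) (cube d) :=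
  (integrableOn_tensorSum_mul_tensorSum (C.integrableOn_partialFactors_mul hm j) c c').congr
    (C.pd_synth_mul_pd_synth_ae_eq hm j c c').symm

lemma integral_pd_synth_mul (hm : 0 < m) (j : Fin d) (c c' : (Fin d → Fin C.size) → ℝ) :
    ∫ x in cube d, pd d j (C.synth d c) x * pd d j (C.synth d c') x =
      modeProd j C.grad c ⬝ᵥ modeProd j C.grad c' := by
  rw [integral_congr_ae (C.pd_synth_mul_pd_synth_ae_eq hm j c c')]
  refine (ipd_tensorSum (C.integrableOn_partialFactors_mul hm j) c c').trans ?_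
  rw [← dotProduct_modeProd_transpose, ← modeProd_mul]
  simp only [C.ip0_partialFactors hm, sum_mul_prod_update_one, dotProduct]

section Model

variable (hm : 2 ∣ m) (hm0 : 0 < m) (hp : 1 ≤ p)

lemma aForm_synth (c c' : (Fin d → Fin C.size) → ℝ) :
    aForm d (C.synth d c) (C.synth d c') = (C.model hm hm0 hp).energy (Fin d) c c' := by
  have hmass : IntegrableOn (fun x => C.synth d c x * C.synth d c' x) (cube d) :=
    integrableOn_tensorSum_mul_tensorSum (fun _ _ _ => integrableOn_piecewiseEval_mul hm0 _ _) c c'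
  have hstiff := fun j => C.integrableOn_pd_synth_mul hm0 j c c'
  rw [aForm, integral_add (integrable_finsetSum _ fun j _ => hstiff j) hmass,
    integral_finsetSum _ fun j _ => hstiff j, UnivariateModel.energy_apply]
  exact congrArg₂ _ (Finset.sum_congr rfl fun j _ => C.integral_pd_synth_mul hm0 j c c')
    (C.ipd_synth hm0 c c')

lemma smootherForm_synth (α : Fin d → Bool) (c c' : (Fin d → Fin C.size) → ℝ) :
    smootherForm d m α (C.synth d c) (C.synth d c') =
      (C.model hm hm0 hp).localSmoother α c c' := by
  simp only [smootherForm, UnivariateModel.localSmoother_apply, C.ipd_synth hm0,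
    C.integral_pd_synth_mul hm0, model]

end Model

lemma piecewiseEval_combination (y : Fin C.size → ℝ) (t : ℝ) :
    piecewiseEval m (C.combination y) t = ∑ i, y i * piecewiseEval m (C.basis i) t := by
  simp [combination_apply]

lemma synth_rankOne (y : Fin d → Fin C.size → ℝ) :
    C.synth d (rankOne y) = fun x => ∏ j, piecewiseEval m (C.combination (y j)) (x j) := by
  simp only [synth, tensorSum_rankOne, piecewiseEval_combination]

lemma exists_piecewiseEval_combination_eq (hm : 0 < m) (hp : 1 ≤ p) {f : ℝ → ℝ}
    (hf : IsSpline m p f) :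
    ∃ y, piecewiseEval m (C.combination y) = f := by
  obtain ⟨q, hq, rfl⟩ := (isSpline_iff_exists hm hp).1 hf
  obtain ⟨y, hy⟩ := C.combination.surjective ⟨q, hq⟩
  exact ⟨y, by rw [hy]⟩

lemma tensorSpline_le_range_synth (hm : 0 < m) (hp : 1 ≤ p) :
    TensorSpline d m p ≤ LinearMap.range (C.synth d) := by
  rw [TensorSpline, Submodule.span_le]
  rintro u ⟨f, hf, rfl⟩
  choose y hy using fun j => C.exists_piecewiseEval_combination_eq hm hp (hf j)
  exact ⟨rankOne y, by simp only [synth_rankOne, hy]⟩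

lemma isSplineC_basis (hm : 0 < m) (hp : 1 ≤ p) (i : Fin C.size) :
    IsSplineC m p (C.label i) (piecewiseEval m (C.basis i)) := by
  cases h : C.label i
  · exact (isSpline0_iff_exists hm hp).2 ⟨_, C.basis_mem i h, rfl⟩
  · exact (isSpline1_iff_exists hm hp).2 ⟨_, (C.basis i).2, C.basis_orthogonal i h, rfl⟩

lemma synth_component_mem (hm : 0 < m) (hp : 1 ≤ p) (α : Fin d → Bool)
    (c : (Fin d → Fin C.size) → ℝ) :
    C.synth d (component C.label α c) ∈ TensorSplineSub d m p α := by
  rw [synth, tensorSum, Fintype.linearCombination_apply]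
  refine Submodule.sum_mem _ fun I _ => ?_
  rw [component_apply]
  split_ifs with h
  · subst h
    exact Submodule.smul_mem _ _
      (Submodule.subset_span ⟨_, fun j => C.isSplineC_basis hm hp (I j), rfl⟩)
  · simp

lemma exists_coeff_of_isSplineC (hm : 0 < m) (hp : 1 ≤ p) {b : Bool} {f : ℝ → ℝ}
    (hf : IsSplineC m p b f) :
    ∃ y, piecewiseEval m (C.combination y) = f ∧ ∀ i, C.label i ≠ b → y i = 0 := by
  cases b
  · obtain ⟨q, hq, rfl⟩ := (isSpline0_iff_exists hm hp).1 hf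
    obtain ⟨y, hy⟩ := C.combination.surjective ⟨q, neumannSplines_le_splines hq⟩
    refine ⟨y, by rw [hy], fun i hi => ?_⟩
    rw [← C.l2Form_basis_combination i y, hy]
    exact C.basis_orthogonal i (by simpa using hi) q hq
  · obtain ⟨q, hq, horth, rfl⟩ := (isSpline1_iff_exists hm hp).1 hf
    obtain ⟨y, hy⟩ := C.combination.surjective ⟨q, hq⟩
    refine ⟨y, by rw [hy], fun i hi => ?_⟩
    rw [← C.l2Form_basis_combination i y, hy, (isPosSemidef_l2Form m).isSymm.eq]
    exact horth _ (C.basis_mem i (by simpa using hi))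

lemma exists_component_eq_of_mem_tensorSplineSub (hm : 0 < m) (hp : 1 ≤ p)
    {α : Fin d → Bool} {u : (Fin d → ℝ) → ℝ} (hu : u ∈ TensorSplineSub d m p α) :
    ∃ c, C.synth d c = u ∧ component C.label α c = c := by
  suffices h : TensorSplineSub d m p α ≤
      LinearMap.range (C.synth d ∘ₗ component C.label α) by
    obtain ⟨c, hc⟩ := h hu
    exact ⟨component C.label α c, hc, by rw [component_component, if_pos rfl]⟩
  rw [TensorSplineSub, Submodule.span_le]
  rintro u ⟨f, hf, rfl⟩
  choose y hy hy0 using fun j => C.exists_coeff_of_isSplineC hm hp (hf j)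
  refine ⟨rankOne y, ?_⟩
  rw [LinearMap.comp_apply, component_rankOne _ hy0]
  simp only [synth_rankOne, hy]

lemma synth_interp_mem_tensorSplineCoarse (hm : 2 ∣ m) (hm0 : 0 < m) (hp : 1 ≤ p)
    (c : (Fin d → Fin C.size) → ℝ) :
    C.synth d ((C.model hm hm0 hp).interp (Fin d) c) ∈ TensorSplineCoarse d m p := by
  suffices h : ⊤ ≤ (TensorSplineCoarse d m p).comap
      (C.synth d ∘ₗ (C.model hm hm0 hp).interp (Fin d)) from h trivial
  rw [← span_range_rankOne_eq_top, Submodule.span_le]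
  rintro _ ⟨y, rfl⟩
  change C.synth d ((C.model hm hm0 hp).interp (Fin d) (rankOne y)) ∈
    TensorSplineCoarse d m p
  rw [UnivariateModel.interp_rankOne, synth_rankOne]
  refine Submodule.subset_span ⟨_, fun j => ?_, rfl⟩
  have hcoarse := C.coarseProj_mem (C.combination (y j))
  rw [← C.combination_projMatrix] at hcoarse
  exact isSpline_half_piecewiseEval hm hm0 hp (C.combination _).2
    (coarseSplines_le_coarsePieces hm hcoarse)

lemma exists_smoothing_coeff (hm : 2 ∣ m) (hm0 : 0 < m) (hp : 1 ≤ p) {τ : ℝ}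
    {c : (Fin d → Fin C.size) → ℝ} {e : (Fin d → ℝ) → ℝ}
    (hstep : SmoothStep d m p τ (C.synth d c) e) :
    ∃ w, C.synth d (c - τ • w) = e ∧
      ∀ z, (C.model hm hm0 hp).smoother (Fin d) w z = (C.model hm hm0 hp).energy (Fin d) c z := by
  obtain ⟨u, hu, rfl⟩ := hstep
  choose W hW hcomp using fun α => C.exists_component_eq_of_mem_tensorSplineSub hm0 hp (hu α).1
  refine ⟨∑ α, W α, by simp only [map_sub, map_smul, map_sum, hW], ?_⟩
  refine UnivariateModel.smoother_eq_of_localSmoother_eq _ hcomp fun α z => ?_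
  rw [← C.smootherForm_synth, hW, ← C.aForm_synth]
  exact (hu α).2 _ (C.synth_component_mem hm0 hp α z)

lemma exists_coarseCorrection_coeff (hm : 2 ∣ m) (hm0 : 0 < m) (hp : 1 ≤ p)
    {c : (Fin d → Fin C.size) → ℝ} {e : (Fin d → ℝ) → ℝ}
    (hcorr : CoarseCorrection d m p (C.synth d c) e) :
    ∃ v, C.synth d v = e ∧
      (C.model hm hm0 hp).energy (Fin d) v v = (C.model hm hm0 hp).energy (Fin d) v c ∧
      ∀ z, C.synth d z ∈ TensorSplineCoarse d m p →
        (C.model hm hm0 hp).energy (Fin d) v z = 0 := by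
  obtain ⟨_, ⟨hmem, horth⟩, rfl⟩ := hcorr
  obtain ⟨g, rfl⟩ :=
    C.tensorSpline_le_range_synth hm0 hp (tensorSplineCoarse_le_tensorSpline hm hmem)
  have hgalerkin : ∀ z, C.synth d z ∈ TensorSplineCoarse d m p →
      (C.model hm hm0 hp).energy (Fin d) (c - g) z = 0 := fun z hz => by
    rw [← C.aForm_synth, map_sub]
    exact horth _ hz
  refine ⟨c - g, map_sub _ _ _, ?_, hgalerkin⟩
  rw [map_sub ((C.model hm hm0 hp).energy (Fin d) (c - g)), hgalerkin g hmem, sub_zero]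

end SplineCoordinates

theorem aForm_twoGrid_le {m p d : ℕ} (hm : 2 ∣ m) (hm0 : 0 < m) (hp : 1 ≤ p)
    {e₀ e₁ e₂ : (Fin d → ℝ) → ℝ} (he₀ : e₀ ∈ TensorSpline d m p)
    (hsmooth : SmoothStep d m p (1 / 2 ^ d) e₀ e₁) (hcoarse : CoarseCorrection d m p e₁ e₂) :
    aForm d e₂ e₂ ≤ (1 - 1 / 2 ^ d / approxConst d) * aForm d e₀ e₀ := by
  obtain ⟨C⟩ := nonempty_splineCoordinates m p
  obtain ⟨c, rfl⟩ := C.tensorSpline_le_range_synth hm0 hp he₀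
  obtain ⟨w, rfl, hw⟩ := C.exists_smoothing_coeff hm hm0 hp hsmooth
  obtain ⟨v, rfl, hv, hgalerkin⟩ := C.exists_coarseCorrection_coeff hm hm0 hp hcoarse
  simp only [C.aForm_synth hm hm0 hp]
  set O := C.model hm hm0 hp
  have hdominated : ∀ x, 1 / 2 ^ d * O.energy (Fin d) x x ≤ O.smoother (Fin d) x x := fun x => by
    have hle := O.energy_le_smoother x
    rwa [Fintype.card_fin, ← div_le_iff₀' (by positivity), div_eq_inv_mul, ← one_div] at hle
  have happrox := O.smoother_sub_interp_le v
  rw [Fintype.card_fin] at happrox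
  exact twoGrid_contraction O.isPosSemidef_energy O.isPosSemidef_smoother
    O.eq_zero_of_smoother_self_eq_zero (by positivity)
    (one_div_two_pow_le_approxConst d) hdominated hw
    ⟨_, hgalerkin _ (C.synth_interp_mem_tensorSplineCoarse hm hm0 hp v), happrox⟩ hv

/-- main theorem: for every `d ≥ 1` there exist a damping
parameter `τ > 0` and a number of smoothing steps `ν`, independent of `h = 1/m` and
`p`, such that the two-grid method on `S^d` with coarse space `(S_c)^d` and the
additive subspace correction smoother built from the operators `L_α` (obtained from
`A_α` by replacing every `K₀` by `σM₀`, `σ = 12h⁻²`) contracts the error in the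
energy norm `‖·‖_A` with a rate `q < 1` that does not depend on `h` or `p`. -/
theorem twogrid_robust_convergence :
    ∀ d : ℕ, 1 ≤ d →
      ∃ τ : ℝ, 0 < τ ∧ ∃ ν : ℕ, 0 < ν ∧ ∃ q : ℝ, 0 ≤ q ∧ q < 1 ∧
        ∀ m p : ℕ, m % 2 = 0 → 2 ≤ m → 1 ≤ p →
          ∀ e : ℕ → (Fin d → ℝ) → ℝ, e 0 ∈ TensorSpline d m p →
            (∀ k < ν, SmoothStep d m p τ (e k) (e (k + 1))) →
            ∀ efinal : (Fin d → ℝ) → ℝ, CoarseCorrection d m p (e ν) efinal →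
              Real.sqrt (aForm d efinal efinal) ≤
                q * Real.sqrt (aForm d (e 0) (e 0)) := by
  intro d _
  have hC : 0 < approxConst d := zero_lt_one.trans_le (one_le_approxConst d)
  have hrate_pos : 0 < 1 / 2 ^ d / approxConst d := by positivity
  have hrate_le : 1 / 2 ^ d / approxConst d ≤ 1 :=
    (div_le_one hC).2 (one_div_two_pow_le_approxConst d)
  refine ⟨1 / 2 ^ d, by positivity, 1, one_pos, √(1 - 1 / 2 ^ d / approxConst d),
    Real.sqrt_nonneg _, ?_, fun m p hm hm2 hp e he hstep efinal hfinal => ?_⟩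
  · rw [Real.sqrt_lt' one_pos]
    linarith
  · rw [← Real.sqrt_mul (sub_nonneg.2 hrate_le)]
    exact Real.sqrt_le_sqrt (aForm_twoGrid_le (Nat.dvd_of_mod_eq_zero hm) (by lia) hp he
      (hstep 0 one_pos) hfinal)

end SplineMG
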